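/- arXiv:math/0601226 — 2 statements merged into one kernel-verified Lean document; each statement's English description precedes it below -/
import Mathlib

section
/- Let X be a metric space of finite Nagata-Assouad dimension (i.e. there is an integer N ≥ 0 with dim_NA(X) ≤ N). Then for every integer n ≥ 0 the following are equivalent: (a) the sphere S^n is a Lipschitz extensor of X; (b) dim_NA(X) ≤ n. -/
/-- A metric space `E` is a Lipschitz extensor of `X` if there is `C > 0` such that for every
`λ > 0`, every `λ`-Lipschitz map `f : A → E` defined on a nonempty subset `A ⊆ X` extends to a
`(C·λ)`-Lipschitz map `X → E`. -/
def LipschitzExtensorOf (X E : Type*) [MetricSpace X] [MetricSpace E] : Prop :=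
  ∃ C : ℝ, 0 < C ∧ ∀ A : Set X, A.Nonempty → ∀ lam : ℝ, 0 < lam →
    ∀ f : A → E, (∀ a b : A, dist (f a) (f b) ≤ lam * dist (a : X) (b : X)) →
      ∃ g : X → E, (∀ a : A, g a = f a) ∧
        ∀ x y : X, dist (g x) (g y) ≤ C * lam * dist x y

/-- The Nagata-Assouad dimension of a metric space `X` is at most `n`: there is `C > 0` such
that for every `r > 0` there is a cover of `X` splitting into `n+1` families, each `r`-disjoint,
with all members of diameter at most `C·r`. -/
def NagataDimLE (X : Type*) [MetricSpace X] (n : ℕ) : Prop :=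
  ∃ C : ℝ, 0 < C ∧ ∀ r : ℝ, 0 < r →
    ∃ U : Fin (n + 1) → Set (Set X),
      (∀ x : X, ∃ i, ∃ V ∈ U i, x ∈ V) ∧
      (∀ i, ∀ V ∈ U i, ∀ W ∈ U i, V ≠ W → ∀ x ∈ V, ∀ y ∈ W, r < dist x y) ∧
      (∀ i, ∀ V ∈ U i, ∀ x ∈ V, ∀ y ∈ V, dist x y ≤ C * r)

/-!
Radial projection turns the Lipschitz extension problem for the unit sphere of `E` into that of
modifying an `E`-valued map off a set so that it avoids the origin. This problem does not depend
on the norm, and a solution in dimension `d` suspends to one in dimension `d + 1`.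

If `X` has Nagata dimension at most `n` and `dim E = n + 1`, glue finitely many values of the map
along a partition of unity with `n + 1` colours. The result lies in finitely many simplices with
`n + 1` vertices, which do not fill `E`, so a small translation moves it off the origin.

Conversely, let `X` have Nagata dimension at most `n + 1`. The differences of the weights of a
partition of unity with `n + 2` colours form a map to `ℝⁿ⁺¹` that is bounded away from the origin
where some weight vanishes; modify it elsewhere so as to be bounded away from it everywhere. Then
the `n + 2` modified weights of a point are never all nearly equal, so a gap separates the `k`
largest of them from the others, for some `1 ≤ k ≤ n + 1`. Sorting points by `k` gives a cover
with `n + 1` colours only, so the dimension drops by one, and descends step by step to its bound.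
-/

open Set Metric Module
open scoped NNReal

/-! ### Lipschitz maps into normed spaces -/

section LipschitzMaps

variable {X E : Type*} [PseudoMetricSpace X] [SeminormedAddCommGroup E] [NormedSpace ℝ E]

lemma lipschitzWith_smul_of_norm_le {K L a b : ℝ≥0} {f : X → ℝ} {g : X → E}
    (hf : LipschitzWith K f) (hg : LipschitzWith L g) (ha : ∀ x, ‖f x‖ ≤ a)
    (hb : ∀ x, ‖g x‖ ≤ b) : LipschitzWith (K * b + a * L) fun x ↦ f x • g x := by
  refine .of_dist_le_mul fun x y ↦ ?_
  calc dist (f x • g x) (f y • g y)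
    _ ≤ dist (f x • g x) (f x • g y) + dist (f x • g y) (f y • g y) := dist_triangle _ _ _
    _ = ‖f x‖ * dist (g x) (g y) + dist (f x) (f y) * ‖g y‖ := by
      rw [dist_smul₀, dist_eq_norm (f x • g y), ← sub_smul, norm_smul, dist_eq_norm (f x)]
    _ ≤ a * (L * dist x y) + K * dist x y * b := by
      gcongr
      exacts [ha x, hg.dist_le_mul x y, hf.dist_le_mul x y, hb y]
    _ = ↑(K * b + a * L) * dist x y := by push_cast; ring

lemma lipschitzWith_lineMap_of_norm_sub_le {K L R M : ℝ≥0} {f g : X → E} {b : X → ℝ}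
    (hf : LipschitzWith K f) (hg : LipschitzWith L g) (hb : LipschitzWith R b)
    (hb_mem : ∀ x, b x ∈ Icc 0 1) (hfg : ∀ x, ‖g x - f x‖ ≤ M) :
    LipschitzWith (R * M + (L + K) + K) fun x ↦ AffineMap.lineMap (f x) (g x) (b x) := by
  have hb_norm (x : X) : ‖b x‖ ≤ (1 : ℝ≥0) := by
    simpa only [Real.norm_of_nonneg (hb_mem x).1, NNReal.coe_one] using (hb_mem x).2
  simpa only [AffineMap.lineMap_apply_module', one_mul] using
    (lipschitzWith_smul_of_norm_le hb (hg.sub hf) hb_norm hfg).add hf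

/-- The piecewise linear function of `t` that vanishes for `t ≤ c / 2` and equals `1` for
`c ≤ t`; it interpolates between two maps according to the size of one of them. -/
noncomputable def cutoff (c : ℝ≥0) (t : ℝ) : ℝ := max 0 (min 1 (2 / c * t - 1))

lemma cutoff_mem_Icc (c : ℝ≥0) (t : ℝ) : cutoff c t ∈ Icc 0 1 :=
  ⟨le_max_left _ _, max_le zero_le_one (min_le_left _ _)⟩

lemma cutoff_of_le_half {c : ℝ≥0} {t : ℝ} (ht : t ≤ c / 2) : cutoff c t = 0 :=
  max_eq_left <| (min_le_right _ _).trans <| by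
    rw [sub_nonpos, div_mul_eq_mul_div]
    exact div_le_one_of_le₀ (by linarith) c.2

lemma cutoff_of_le {c : ℝ≥0} (hc : 0 < c) {t : ℝ} (ht : c ≤ t) : cutoff c t = 1 := by
  have : 1 ≤ 2 / c * t - 1 := by
    rw [le_sub_iff_add_le, div_mul_eq_mul_div, le_div_iff₀ (by exact_mod_cast hc)]; linarith
  rw [cutoff, min_eq_left this, max_eq_right zero_le_one]

lemma lipschitzWith_cutoff (c : ℝ≥0) : LipschitzWith (2 / c) (cutoff c) := by
  have h : LipschitzWith (2 / c) fun t : ℝ ↦ 2 / (c : ℝ) * t - 1 := .of_dist_le_mul fun s t ↦ by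
    rw [Real.dist_eq, sub_sub_sub_cancel_right, ← mul_sub, abs_mul, ← Real.dist_eq,
      abs_of_nonneg (by positivity), NNReal.coe_div, NNReal.coe_ofNat]
  exact (h.const_min 1).const_max 0

lemma exists_lipschitzWith_interpolation {E' : Type*} [SeminormedAddCommGroup E']
    {K L R M c : ℝ≥0} (hc : 0 < c) {f g : X → E} {h : X → E'} (hf : LipschitzWith K f)
    (hg : LipschitzWith L g) (hh : LipschitzWith R h) (hfg : ∀ x, ‖g x - f x‖ ≤ M) :
    ∃ Z : X → E, LipschitzWith (2 / c * R * M + (L + K) + K) Z ∧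
      (∀ x, Z x ∈ segment ℝ (f x) (g x)) ∧ (∀ x, ‖h x‖ ≤ c / 2 → Z x = f x) ∧
      (∀ x, c ≤ ‖h x‖ → Z x = g x) := by
  have hb : LipschitzWith (2 / c * R) fun x ↦ cutoff c ‖h x‖ :=
    ((lipschitzWith_cutoff c).comp (lipschitzWith_one_norm.comp hh)).weaken (by rw [one_mul])
  refine ⟨fun x ↦ AffineMap.lineMap (f x) (g x) (cutoff c ‖h x‖),
    lipschitzWith_lineMap_of_norm_sub_le hf hg hb (fun x ↦ cutoff_mem_Icc _ _) hfg,
    fun x ↦ ?_, fun x hx ↦ ?_, fun x hx ↦ ?_⟩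
  · rw [segment_eq_image_lineMap]
    exact mem_image_of_mem _ (cutoff_mem_Icc _ _)
  · simp only [cutoff_of_le_half hx, AffineMap.lineMap_apply_zero]
  · simp only [cutoff_of_le hc hx, AffineMap.lineMap_apply_one]

/-- Radial projection of `{v | c ≤ ‖v‖}` onto the unit sphere, extended to all vectors as a
Lipschitz map by replacing the norm in the denominator with `max c ‖v‖`. -/
noncomputable def truncNormalize (c : ℝ≥0) (v : E) : E := (max (c : ℝ) ‖v‖)⁻¹ • v

lemma norm_truncNormalize_le_one (c : ℝ≥0) (v : E) : ‖truncNormalize c v‖ ≤ 1 := by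
  have h : 0 ≤ max (c : ℝ) ‖v‖ := le_max_of_le_left c.2
  rw [truncNormalize, norm_smul, norm_inv, Real.norm_of_nonneg h]
  exact inv_mul_le_one_of_le₀ (le_max_right _ _) h

lemma norm_truncNormalize {c : ℝ≥0} (hc : 0 < c) {v : E} (hv : c ≤ ‖v‖) :
    ‖truncNormalize c v‖ = 1 := by
  have hv₀ : 0 < ‖v‖ := lt_of_lt_of_le (by exact_mod_cast hc) hv
  rw [truncNormalize, max_eq_right hv, norm_smul, norm_inv, norm_norm, inv_mul_cancel₀ hv₀.ne']

lemma truncNormalize_of_norm_eq_one {c : ℝ≥0} (hc : c ≤ 1) {v : E} (hv : ‖v‖ = 1) :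
    truncNormalize c v = v := by
  rw [truncNormalize, hv, max_eq_right (by exact_mod_cast hc), inv_one, one_smul]

lemma max_smul_truncNormalize {c : ℝ≥0} (hc : 0 < c) (v : E) :
    max (c : ℝ) ‖v‖ • truncNormalize c v = v :=
  smul_inv_smul₀ (lt_max_of_lt_left (by exact_mod_cast hc)).ne' v

lemma lipschitzWith_truncNormalize {c : ℝ≥0} (hc : 0 < c) :
    LipschitzWith (2 / c) (truncNormalize c : E → E) := by
  refine .of_dist_le_mul fun v w ↦ ?_
  set m := max (c : ℝ) ‖v‖
  set k := max (c : ℝ) ‖w‖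
  have hc' : (0 : ℝ) < c := by exact_mod_cast hc
  have hm₀ : 0 < m := lt_max_of_lt_left hc'
  have hkm : ‖k - m‖ ≤ ‖v - w‖ := by
    have := (lipschitzWith_one_norm.const_max (c : ℝ)).norm_sub_le w v
    rwa [NNReal.coe_one, one_mul, norm_sub_rev w v] at this
  have h_eq : truncNormalize c v - truncNormalize c w =
      m⁻¹ • ((v - w) + (k - m) • truncNormalize c w) := by
    rw [sub_smul k, max_smul_truncNormalize hc, sub_add_sub_cancel, smul_sub,
      inv_smul_smul₀ hm₀.ne', truncNormalize]
  calc dist (truncNormalize c v) (truncNormalize c w)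
    _ ≤ m⁻¹ * (‖v - w‖ + ‖k - m‖ * ‖truncNormalize c w‖) := by
      rw [dist_eq_norm, h_eq, norm_smul, Real.norm_of_nonneg (inv_pos.2 hm₀).le, ← norm_smul]
      gcongr
      exact norm_add_le _ _
    _ ≤ (c : ℝ)⁻¹ * (‖v - w‖ + ‖v - w‖ * 1) := by
      gcongr
      exacts [le_max_left _ _, norm_truncNormalize_le_one c w]
    _ = ↑(2 / c) * dist v w := by rw [dist_eq_norm]; push_cast; ring

end LipschitzMaps

/-! ### Coloured covers and partitions of unity -/

/-- `U` covers `X`, each family `U i` is `r`-disjoint, and all members have diameter at most `D`: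
the covers that `NagataDimLE` asks for, at a single scale and for an arbitrary set `ι` of
colours. -/
structure IsNagataCover {X ι : Type*} [PseudoMetricSpace X] (U : ι → Set (Set X))
    (r D : ℝ) : Prop where
  exists_mem : ∀ x, ∃ i, ∃ V ∈ U i, x ∈ V
  lt_dist : ∀ i, ∀ V ∈ U i, ∀ W ∈ U i, V ≠ W → ∀ x ∈ V, ∀ y ∈ W, r < dist x y
  dist_le : ∀ i, ∀ V ∈ U i, ∀ x ∈ V, ∀ y ∈ V, dist x y ≤ D

lemma nagataDimLE_iff {X : Type*} [MetricSpace X] {n : ℕ} :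
    NagataDimLE X n ↔ ∃ C : ℝ, 0 < C ∧ ∀ r : ℝ, 0 < r →
      ∃ U : Fin (n + 1) → Set (Set X), IsNagataCover U r (C * r) :=
  exists_congr fun _ ↦ and_congr_right' <| forall₂_congr fun _ _ ↦ exists_congr fun _ ↦
    ⟨fun ⟨h₁, h₂, h₃⟩ ↦ ⟨h₁, h₂, h₃⟩, fun ⟨h₁, h₂, h₃⟩ ↦ ⟨h₁, h₂, h₃⟩⟩

lemma IsNagataCover.recolor {X ι κ : Type*} [PseudoMetricSpace X] {U : ι → Set (Set X)}
    {r D : ℝ} (hU : IsNagataCover U r D) {e : ι → κ} (he : e.Injective) :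
    IsNagataCover (fun k ↦ {V | ∃ i, e i = k ∧ V ∈ U i}) r D where
  exists_mem x :=
    let ⟨i, V, hV, hx⟩ := hU.exists_mem x
    ⟨e i, V, ⟨i, rfl, hV⟩, hx⟩
  lt_dist := by
    rintro _ V ⟨i, rfl, hV⟩ W ⟨j, hij, hW⟩
    exact hU.lt_dist i V hV W (he hij ▸ hW)
  dist_le := by
    rintro _ V ⟨i, -, hV⟩
    exact hU.dist_le i V hV

lemma NagataDimLE.mono {X : Type*} [MetricSpace X] {m n : ℕ} (hm : NagataDimLE X m)
    (hmn : m ≤ n) : NagataDimLE X n := by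
  obtain ⟨C, hC, H⟩ := nagataDimLE_iff.1 hm
  refine nagataDimLE_iff.2 ⟨C, hC, fun r hr ↦ ?_⟩
  obtain ⟨U, hU⟩ := H r hr
  exact ⟨_, hU.recolor (Fin.castLE_injective (Nat.succ_le_succ hmn))⟩

/-- A partition of unity at scale `s` subordinate to the `s`-neighbourhoods of a coloured cover,
one function per colour. The point `center i x` stands for the member of colour `i` near `x`: it
is locally constant, at scale `s`, on the support of `weight i`. -/
structure ColoredPartition (ι X : Type*) [Fintype ι] [PseudoMetricSpace X] (s C : ℝ≥0) where
  weight : ι → X → ℝ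
  center : ι → X → X
  weight_nonneg : ∀ i x, 0 ≤ weight i x
  sum_weight : ∀ x, ∑ i, weight i x = 1
  lipschitzWith_weight : ∀ i, LipschitzWith (C / s) (weight i)
  dist_center_le : ∀ {i x}, weight i x ≠ 0 → dist x (center i x) ≤ C * s
  center_eq : ∀ {i x y}, weight i x ≠ 0 → weight i y ≠ 0 → dist x y ≤ s → center i x = center i y

lemma lipschitzWith_div_sum {ι X : Type*} [Fintype ι] [PseudoMetricSpace X] {K : ℝ≥0}
    {p : ι → X → ℝ} (hp : ∀ i, LipschitzWith K (p i)) (hp_nonneg : ∀ i x, 0 ≤ p i x)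
    (hp_sum : ∀ x, 1 ≤ ∑ i, p i x) (i : ι) :
    LipschitzWith ((Fintype.card ι + 1) * K) fun x ↦ p i x / ∑ j, p j x := by
  refine .of_dist_le_mul fun x y ↦ ?_
  set S : X → ℝ := fun x ↦ ∑ j, p j x
  have hS (x : X) : 0 < S x := zero_lt_one.trans_le (hp_sum x)
  have h_quot : |p i y / S y| ≤ 1 := by
    rw [abs_of_nonneg (div_nonneg (hp_nonneg i y) (hS y).le), div_le_one (hS y)]
    exact Finset.single_le_sum (fun j _ ↦ hp_nonneg j y) (Finset.mem_univ i)
  have h_sum : |S y - S x| ≤ Fintype.card ι * (K * dist x y) := by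
    rw [abs_sub_comm, ← Real.dist_eq]
    calc dist (S x) (S y)
      _ ≤ ∑ j, dist (p j x) (p j y) := dist_sum_sum_le _ _ _
      _ ≤ ∑ _j : ι, K * dist x y := Finset.sum_le_sum fun j _ ↦ (hp j).dist_le_mul x y
      _ = Fintype.card ι * (K * dist x y) := by simp
  have h_eq : p i x / S x - p i y / S y =
      ((p i x - p i y) + p i y / S y * (S y - S x)) / S x := by
    field_simp [(hS x).ne', (hS y).ne']
    ring
  calc dist (p i x / S x) (p i y / S y)
    _ ≤ |(p i x - p i y) + p i y / S y * (S y - S x)| := by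
      rw [Real.dist_eq, h_eq, abs_div, abs_of_pos (hS x)]
      exact div_le_self (abs_nonneg _) (hp_sum x)
    _ ≤ |p i x - p i y| + |p i y / S y| * |S y - S x| :=
      (abs_add_le _ _).trans_eq (by rw [abs_mul])
    _ ≤ K * dist x y + 1 * (Fintype.card ι * (K * dist x y)) := by
      gcongr
      exact (hp i).dist_le_mul x y
    _ = ↑((Fintype.card ι + 1) * K) * dist x y := by push_cast; ring

lemma exists_lipschitzWith_weights {ι X : Type*} [Fintype ι] [PseudoMetricSpace X]
    {U : ι → Set (Set X)} (hU : ∀ x, ∃ i, ∃ V ∈ U i, x ∈ V) {s : ℝ≥0} (hs : 0 < s) :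
    ∃ p : ι → X → ℝ, (∀ i x, 0 ≤ p i x) ∧ (∀ i, LipschitzWith s⁻¹ (p i)) ∧
      (∀ x, 1 ≤ ∑ i, p i x) ∧ ∀ i x, p i x ≠ 0 → ∃ V ∈ U i, ∃ w ∈ V, dist x w < s := by
  have hs' : (0 : ℝ) < s := by exact_mod_cast hs
  have h_nonneg (i : ι) (x : X) : (0 : ℝ) ≤ thickenedIndicator hs' (⋃₀ U i) x :=
    NNReal.zero_le_coe
  refine ⟨fun i x ↦ thickenedIndicator hs' (⋃₀ U i) x, h_nonneg, fun i ↦ ?_, fun x ↦ ?_,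
    fun i x hx ↦ ?_⟩
  · simpa only [Function.comp_def, one_mul, Real.toNNReal_coe] using
      NNReal.isometry_coe.lipschitz.comp (lipschitzWith_thickenedIndicator hs' (⋃₀ U i))
  · obtain ⟨i, V, hV, hx⟩ := hU x
    have hi : (thickenedIndicator hs' (⋃₀ U i) x : ℝ) = 1 := congrArg NNReal.toReal <|
      thickenedIndicator_one hs' (⋃₀ U i) (mem_sUnion_of_mem hx hV)
    exact hi.symm.trans_le
      (Finset.single_le_sum (fun j _ ↦ h_nonneg j x) (Finset.mem_univ i))
  · obtain ⟨w, ⟨V, hV, hw⟩, hxw⟩ := mem_thickening_iff.1 <|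
      not_imp_comm.1 (thickenedIndicator_zero hs' (⋃₀ U i)) (NNReal.coe_ne_zero.1 hx)
    exact ⟨V, hV, w, hw, hxw⟩

lemma IsNagataCover.nonempty_coloredPartition {ι X : Type*} [Fintype ι] [PseudoMetricSpace X]
    {U : ι → Set (Set X)} {s C : ℝ≥0} (hs : 0 < s) (hU : IsNagataCover U (4 * s) (C * s)) :
    Nonempty (ColoredPartition ι X s (C + Fintype.card ι + 1)) := by
  obtain ⟨p, hp_nonneg, hp_lip, hp_sum, hp_mem⟩ := exists_lipschitzWith_weights hU.exists_mem hs
  replace hp_mem (i : ι) (x : X) (hx : p i x / ∑ j, p j x ≠ 0) :=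
    hp_mem i x (div_ne_zero_iff.1 hx).1
  choose! V hV w hw hxw using hp_mem
  have h_center {i : ι} {x : X} (hx : p i x / ∑ j, p j x ≠ 0) :
      @Classical.epsilon X ⟨x⟩ (· ∈ V i x) ∈ V i x :=
    Classical.epsilon_spec (p := (· ∈ V i x)) ⟨w i x, hw i x hx⟩
  refine ⟨{
    weight i x := p i x / ∑ j, p j x
    center i x := @Classical.epsilon X ⟨x⟩ (· ∈ V i x)
    weight_nonneg i x := div_nonneg (hp_nonneg i x) (zero_le_one.trans (hp_sum x))
    sum_weight x := by rw [← Finset.sum_div, div_self (zero_lt_one.trans_le (hp_sum x)).ne']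
    lipschitzWith_weight i := (lipschitzWith_div_sum hp_lip hp_nonneg hp_sum i).weaken ?_
    dist_center_le {i x} hx := ?_
    center_eq {i x y} hx hy hxy := ?_ }⟩
  · rw [← div_eq_mul_inv, add_assoc C]
    gcongr ?_ / _
    exact le_add_self
  · have := hU.dist_le i _ (hV i x hx) _ (hw i x hx) _ (h_center hx)
    have : (Fintype.card ι : ℝ) * s ≥ 0 := by positivity
    push_cast
    linarith [dist_triangle x (w i x) (@Classical.epsilon X ⟨x⟩ (· ∈ V i x)), hxw i x hx]
  · have hVV : V i x = V i y := by
      by_contra h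
      have := hU.lt_dist i _ (hV i x hx) _ (hV i y hy) h _ (hw i x hx) _ (hw i y hy)
      linarith [dist_triangle4 (w i x) x y (w i y), dist_comm x (w i x), hxw i x hx, hxw i y hy]
    simp only [hVV]

lemma NagataDimLE.exists_coloredPartition {X : Type*} [MetricSpace X] {n : ℕ}
    (h : NagataDimLE X n) : ∃ C : ℝ≥0, 0 < C ∧
      ∀ s : ℝ≥0, 0 < s → Nonempty (ColoredPartition (Fin (n + 1)) X s C) := by
  obtain ⟨C, hC, H⟩ := nagataDimLE_iff.1 h
  lift C to ℝ≥0 using hC.le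
  refine ⟨4 * C + Fintype.card (Fin (n + 1)) + 1, by positivity, fun s hs ↦ ?_⟩
  obtain ⟨U, hU⟩ := H (4 * s) (by positivity)
  refine IsNagataCover.nonempty_coloredPartition hs (U := U) ?_
  convert hU using 1
  push_cast
  ring

namespace ColoredPartition

variable {ι X E : Type*} [Fintype ι] [PseudoMetricSpace X] [SeminormedAddCommGroup E]
  [NormedSpace ℝ E] {s C : ℝ≥0} (P : ColoredPartition ι X s C)

lemma norm_weight_le_one (i : ι) (x : X) : ‖P.weight i x‖ ≤ 1 := by
  rw [Real.norm_of_nonneg (P.weight_nonneg i x), ← P.sum_weight x]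
  exact Finset.single_le_sum (f := (P.weight · x)) (fun j _ ↦ P.weight_nonneg j x)
    (Finset.mem_univ i)

/-- The barycentre of the values of `q` at the centres of the partition, a Lipschitz
approximation of `q` at the scale of the partition. -/
def glue (q : X → E) (x : X) : E := ∑ i, P.weight i x • q (P.center i x)

lemma exists_weight_smul_sub_eq (q : X → E) (i : ι) {x y : X} (hxy : dist x y ≤ s) :
    ∃ z, P.weight i x • q (P.center i x) - P.weight i y • q (P.center i y) =
      (P.weight i x - P.weight i y) • q z := by
  by_cases hx : P.weight i x = 0
  · exact ⟨P.center i y, by rw [hx, zero_smul, sub_smul, zero_smul]⟩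
  by_cases hy : P.weight i y = 0
  · exact ⟨P.center i x, by rw [hy, zero_smul, sub_zero, sub_zero]⟩
  exact ⟨P.center i x, by rw [P.center_eq hx hy hxy, sub_smul]⟩

lemma lipschitzWith_weight_smul (hs : 0 < s) {q : X → E} {M : ℝ≥0} (hq : ∀ x, ‖q x‖ ≤ M)
    (i : ι) : LipschitzWith (M * (C + 2) / s) fun x ↦ P.weight i x • q (P.center i x) := by
  have hs' : (0 : ℝ) < s := by exact_mod_cast hs
  refine .of_dist_le_mul fun x y ↦ ?_
  rw [dist_eq_norm]
  have h_const : C / s * dist x y * M + 2 * M * dist x y / s =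
      ↑(M * (C + 2) / s) * dist x y := by push_cast; ring
  rcases le_or_gt (dist x y) s with hxy | hxy
  · obtain ⟨z, hz⟩ := P.exists_weight_smul_sub_eq q i hxy
    calc _ = dist (P.weight i x) (P.weight i y) * ‖q z‖ := by rw [hz, norm_smul, dist_eq_norm]
      _ ≤ C / s * dist x y * M := by
        gcongr
        exacts [(P.lipschitzWith_weight i).dist_le_mul x y, hq z]
      _ ≤ _ := by rw [← h_const]; exact le_add_of_nonneg_right (by positivity)
  · have h_le (x : X) : ‖P.weight i x • q (P.center i x)‖ ≤ M := by
      rw [norm_smul, ← one_mul (M : ℝ)]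
      exact mul_le_mul (P.norm_weight_le_one i x) (hq _) (norm_nonneg _) zero_le_one
    calc _ ≤ (M : ℝ) + M := (norm_sub_le _ _).trans (add_le_add (h_le x) (h_le y))
      _ = 2 * M * 1 := by ring
      _ ≤ 2 * M * (dist x y / s) := by gcongr; exact (one_le_div hs').2 hxy.le
      _ ≤ _ := by rw [← h_const, mul_div_assoc]; exact le_add_of_nonneg_left (by positivity)

lemma lipschitzWith_glue (hs : 0 < s) {q : X → E} {M : ℝ≥0} (hq : ∀ x, ‖q x‖ ≤ M) :
    LipschitzWith (Fintype.card ι * (M * (C + 2) / s)) (P.glue q) := by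
  refine .of_dist_le_mul fun x y ↦ ?_
  calc dist (P.glue q x) (P.glue q y)
    _ ≤ ∑ i, dist (P.weight i x • q (P.center i x)) (P.weight i y • q (P.center i y)) :=
      dist_sum_sum_le _ _ _
    _ ≤ ∑ _i : ι, ↑(M * (C + 2) / s) * dist x y :=
      Finset.sum_le_sum fun i _ ↦ (P.lipschitzWith_weight_smul hs hq i).dist_le_mul x y
    _ = ↑(Fintype.card ι * (M * (C + 2) / s)) * dist x y := by
      rw [Finset.sum_const, Finset.card_univ, nsmul_eq_mul, NNReal.coe_mul, NNReal.coe_natCast,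
        mul_assoc]

lemma glue_mem_convexHull (q : X → E) (x : X) :
    P.glue q x ∈ convexHull ℝ (range fun i ↦ q (P.center i x)) :=
  (convex_convexHull ℝ _).sum_mem (fun i _ ↦ P.weight_nonneg i x) (P.sum_weight x)
    fun i _ ↦ subset_convexHull ℝ _ ⟨i, rfl⟩

lemma norm_sub_glue_le {q : X → E} {v : E} {x : X} {ε : ℝ}
    (hq : ∀ y, dist x y ≤ C * s → ‖v - q y‖ ≤ ε) : ‖v - P.glue q x‖ ≤ ε := by
  have h : ∑ᶠ i, P.weight i x • q (P.center i x) ∈ closedBall v ε :=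
    (convex_closedBall v ε).finsum_mem (P.weight_nonneg · x)
      (by rw [finsum_eq_sum_of_fintype, P.sum_weight]) fun i hi ↦ by
        rw [mem_closedBall', dist_eq_norm]
        exact hq _ (P.dist_center_le hi)
  rwa [finsum_eq_sum_of_fintype, mem_closedBall', dist_eq_norm] at h

end ColoredPartition

/-! ### General position -/

section GeneralPosition

variable {ι E : Type*} [Fintype ι] [NormedAddCommGroup E] [NormedSpace ℝ E]
  [FiniteDimensional ℝ E]

lemma interior_convexHull_range_eq_empty (hι : Fintype.card ι ≤ finrank ℝ E) (p : ι → E) :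
    interior (convexHull ℝ (range p)) = ∅ := by
  by_contra! h
  rw [interior_convexHull_nonempty_iff_affineSpan_eq_top] at h
  rcases isEmpty_or_nonempty ι with hι' | hι'
  · rw [range_eq_empty, AffineSubspace.span_empty] at h
    exact AffineSubspace.bot_ne_top ℝ E E h
  · have h_rank := finrank_vectorSpan_range_add_one_le ℝ p
    rw [← direction_affineSpan, h, AffineSubspace.direction_top, finrank_top] at h_rank
    omega

lemma exists_forall_le_norm_sub_of_mem_convexHull (hι : Fintype.card ι ≤ finrank ℝ E)
    {P : Set E} (hP : P.Finite) {ε : ℝ} (hε : 0 < ε) :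
    ∃ z : E, ‖z‖ < ε ∧ ∃ δ : ℝ≥0, 0 < δ ∧
      ∀ p : ι → E, (∀ i, p i ∈ P) → ∀ y ∈ convexHull ℝ (range p), δ ≤ ‖y - z‖ := by
  have hfin : {p : ι → E | ∀ i, p i ∈ P}.Finite := Finite.pi' fun _ ↦ hP
  let D : Set E := ⋂ p ∈ {p : ι → E | ∀ i, p i ∈ P}, (convexHull ℝ (range p))ᶜ
  have hopen (p : ι → E) : IsOpen (convexHull ℝ (range p))ᶜ :=
    ((finite_range p).isClosed_convexHull ℝ).isOpen_compl
  have hD : Dense D := dense_biInter_of_isOpen (fun p _ ↦ hopen p) hfin.countable fun p _ ↦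
    interior_eq_empty_iff_dense_compl.1 (interior_convexHull_range_eq_empty hι p)
  obtain ⟨z, hz, hzD⟩ := hD.exists_dist_lt 0 hε
  obtain ⟨δ, hδ, hball⟩ := isOpen_iff.1 (hfin.isOpen_biInter fun p _ ↦ hopen p) z hz
  lift δ to ℝ≥0 using hδ.le
  refine ⟨z, by rwa [dist_zero_left] at hzD, δ, by exact_mod_cast hδ, fun p hp y hy ↦ ?_⟩
  by_contra! h
  exact mem_iInter₂.1 (hball (mem_ball_iff_norm.2 h)) p hp hy

lemma exists_finite_subset_closedBall_forall_norm_sub_le (M : ℝ) {ε : ℝ} (hε : 0 < ε) :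
    ∃ P ⊆ closedBall (0 : E) M, P.Finite ∧ ∀ v : E, ‖v‖ ≤ M → ∃ p ∈ P, ‖v - p‖ ≤ ε := by
  have := FiniteDimensional.proper_real E
  obtain ⟨P, hPM, hP, hcover⟩ := (isCompact_closedBall (0 : E) M).finite_cover_balls hε
  refine ⟨P, hPM, hP, fun v hv ↦ ?_⟩
  obtain ⟨p, hp, hvp⟩ := mem_iUnion₂.1 (hcover (mem_closedBall_zero_iff.2 hv))
  exact ⟨p, hp, (mem_ball_iff_norm.1 hvp).le⟩

end GeneralPosition

/-- Quantise the values of `F`, glue them along a fine partition, and translate by a small vector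
in general position: a simplex on `card ι` points cannot fill the space. -/
lemma exists_lipschitzWith_norm_sub_le_and_le_norm {ι X E : Type*} [Fintype ι]
    [PseudoMetricSpace X] [NormedAddCommGroup E] [NormedSpace ℝ E] [FiniteDimensional ℝ E]
    (hι : Fintype.card ι ≤ finrank ℝ E) {C : ℝ≥0} (hC : 0 < C)
    (hX : ∀ s : ℝ≥0, 0 < s → Nonempty (ColoredPartition ι X s C)) (M : ℝ≥0) {ε : ℝ≥0}
    (hε : 0 < ε) : ∃ δ : ℝ≥0, 0 < δ ∧ ∃ C' : ℝ≥0, ∀ K : ℝ≥0, 0 < K → ∀ F : X → E,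
      LipschitzWith K F → (∀ x, ‖F x‖ ≤ M) →
      ∃ G : X → E, LipschitzWith (C' * K) G ∧ (∀ x, ‖F x - G x‖ ≤ ε) ∧ ∀ x, δ ≤ ‖G x‖ := by
  have hε' : (0 : ℝ) < ε / 3 := by positivity
  obtain ⟨P, hPM, hP, hP_net⟩ :=
    exists_finite_subset_closedBall_forall_norm_sub_le (E := E) M hε'
  choose! Q hQ hQ_dist using hP_net
  obtain ⟨z, hz, δ, hδ, hδz⟩ := exists_forall_le_norm_sub_of_mem_convexHull hι hP hε'
  refine ⟨δ, hδ, Fintype.card ι * (M * (C + 2)) * (3 * C / ε), fun K hK F hF hFM ↦ ?_⟩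
  have hs : 0 < ε / (3 * C * K) := by positivity
  obtain ⟨p⟩ := hX (ε / (3 * C * K)) hs
  have hQF (x : X) : Q (F x) ∈ P := hQ _ (hFM x)
  have h_glue (x : X) : ‖F x - p.glue (Q ∘ F) x‖ ≤ ε / 3 + ε / 3 :=
    p.norm_sub_glue_le fun y hxy ↦ calc
      ‖F x - Q (F y)‖ ≤ ‖F x - F y‖ + ‖F y - Q (F y)‖ := norm_sub_le_norm_sub_add_norm_sub _ _ _
      _ ≤ K * (C * ↑(ε / (3 * C * K))) + ε / 3 := by
        rw [← dist_eq_norm (F x)]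
        exact add_le_add ((hF.dist_le_mul x y).trans (by gcongr)) (hQ_dist _ (hFM y))
      _ = ε / 3 + ε / 3 := by push_cast; field_simp
  refine ⟨fun x ↦ p.glue (Q ∘ F) x - z, ?_, fun x ↦ ?_, fun x ↦
    hδz _ (fun i ↦ hQF _) _ (p.glue_mem_convexHull (Q ∘ F) x)⟩
  · have := (p.lipschitzWith_glue hs fun x ↦ mem_closedBall_zero_iff.1 (hPM (hQF x))).sub
      (LipschitzWith.const z)
    exact this.weaken (le_of_eq (by field_simp; ring))
  · calc ‖F x - (p.glue (Q ∘ F) x - z)‖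
      _ = ‖F x - p.glue (Q ∘ F) x + z‖ := by rw [sub_sub_eq_add_sub, add_sub_right_comm]
      _ ≤ (ε / 3 + ε / 3) + ε / 3 := norm_add_le_of_le (h_glue x) hz.le
      _ = ε := by ring

/-! ### Extensions avoiding the origin -/

lemma lipschitzExtensorOf_coe_iff {X Y : Type*} [MetricSpace X] [MetricSpace Y] {S : Set Y}
    (hS : S.Nonempty) : LipschitzExtensorOf X S ↔ ∃ C : ℝ≥0, ∀ (A : Set X) (K : ℝ≥0), 0 < K →
      ∀ f : X → Y, MapsTo f A S → LipschitzOnWith K f A →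
        ∃ g : X → Y, LipschitzWith (C * K) g ∧ (∀ x, g x ∈ S) ∧ EqOn g f A := by
  obtain ⟨y₀, hy₀⟩ := hS
  constructor
  · rintro ⟨C, hC, H⟩
    lift C to ℝ≥0 using hC.le
    refine ⟨C, fun A K hK f hfS hf ↦ ?_⟩
    rcases A.eq_empty_or_nonempty with rfl | hA
    · exact ⟨fun _ ↦ y₀, .const' y₀, fun _ ↦ hy₀, eqOn_empty _ _⟩
    obtain ⟨g, hgf, hg⟩ := H A hA K (by exact_mod_cast hK) (hfS.restrict f A S)
      fun a b ↦ hf.dist_le_mul a a.2 b b.2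
    exact ⟨fun x ↦ g x, .of_dist_le_mul fun x y ↦ hg x y,
      fun x ↦ (g x).2, fun a ha ↦ congrArg Subtype.val (hgf ⟨a, ha⟩)⟩
  · rintro ⟨C, H⟩
    refine ⟨C + 1, by positivity, fun A _ K hK f hf ↦ ?_⟩
    lift K to ℝ≥0 using hK.le
    have : Nonempty Y := ⟨y₀⟩
    obtain ⟨F, hF⟩ := (Subtype.val_injective (p := (· ∈ A))).surjective_comp_right
      fun a ↦ (f a : Y)
    have hFf (a : A) : F a = f a := congrFun hF a
    obtain ⟨g, hg, hgS, hgF⟩ := H A K (by exact_mod_cast hK) F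
      (fun a ha ↦ by rw [hFf ⟨a, ha⟩]; exact (f ⟨a, ha⟩).2)
      (.of_dist_le_mul fun a ha b hb ↦ by
        rw [hFf ⟨a, ha⟩, hFf ⟨b, hb⟩]; exact hf ⟨a, ha⟩ ⟨b, hb⟩)
    refine ⟨fun x ↦ ⟨g x, hgS x⟩, fun a ↦ Subtype.ext ((hgF a.2).trans (hFf a)), fun x y ↦ ?_⟩
    refine (hg.dist_le_mul x y).trans ?_
    push_cast
    gcongr
    linarith

/-- Every bounded Lipschitz map into `E` whose norm is bounded below on a set `A` can be modified
off `A` so that its norm is bounded below everywhere, with control of all constants. Unlike the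
property that the unit sphere of `E` is a Lipschitz extensor of `X`, to which it is equivalent,
this one visibly does not depend on the choice of norm. -/
def AnnulusExtension (X E : Type*) [PseudoMetricSpace X] [SeminormedAddCommGroup E] : Prop :=
  ∀ c : ℝ≥0, 0 < c → ∀ M : ℝ≥0, ∃ c' : ℝ≥0, 0 < c' ∧ ∃ M' C : ℝ≥0,
    ∀ (A : Set X) (K : ℝ≥0), 0 < K → ∀ F : X → E, LipschitzWith K F → (∀ x, ‖F x‖ ≤ M) →
      (∀ x ∈ A, c ≤ ‖F x‖) →
      ∃ G : X → E, LipschitzWith (C * K) G ∧ (∀ x, c' ≤ ‖G x‖) ∧ (∀ x, ‖G x‖ ≤ M') ∧ EqOn G F A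

section Sphere

variable {X E : Type*} [MetricSpace X] [NormedAddCommGroup E] [NormedSpace ℝ E] [Nontrivial E]

lemma AnnulusExtension.of_lipschitzExtensorOf_sphere
    (h : LipschitzExtensorOf X (sphere (0 : E) 1)) : AnnulusExtension X E := by
  obtain ⟨C, H⟩ :=
    (lipschitzExtensorOf_coe_iff (NormedSpace.sphere_nonempty.2 zero_le_one)).1 h
  refine fun c hc M ↦ ⟨c, hc, max c M, 1 * 1 + max c M * (C * (2 / c)),
    fun A K hK F hF hFM hFA ↦ ?_⟩
  obtain ⟨V, hV, hV_norm, hVA⟩ := H A (2 / c * K) (by positivity) (truncNormalize c ∘ F)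
    (fun a ha ↦ mem_sphere_zero_iff_norm.2 (norm_truncNormalize hc (hFA a ha)))
    ((lipschitzWith_truncNormalize hc).comp hF).lipschitzOnWith
  have h_max : LipschitzWith K fun x ↦ max (c : ℝ) ‖F x‖ :=
    ((lipschitzWith_one_norm.comp hF).const_max c).weaken (one_mul K).le
  have h_nonneg (x : X) : 0 ≤ max (c : ℝ) ‖F x‖ := le_max_of_le_right (norm_nonneg _)
  have h_norm (x : X) : ‖max (c : ℝ) ‖F x‖ • V x‖ = max (c : ℝ) ‖F x‖ := by
    rw [norm_smul, mem_sphere_zero_iff_norm.1 (hV_norm x), mul_one,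
      Real.norm_of_nonneg (h_nonneg x)]
  have h_le (x : X) : max (c : ℝ) ‖F x‖ ≤ ↑(max c M) := by
    push_cast
    exact max_le_max_left _ (hFM x)
  refine ⟨fun x ↦ max (c : ℝ) ‖F x‖ • V x, ?_, fun x ↦ ?_, fun x ↦ ?_, fun a ha ↦ ?_⟩
  · refine (lipschitzWith_smul_of_norm_le h_max hV (a := max c M) (b := 1) (fun x ↦ ?_)
      fun x ↦ ?_).weaken (le_of_eq (by ring))
    · rw [Real.norm_of_nonneg (h_nonneg x)]
      exact h_le x
    · rw [mem_sphere_zero_iff_norm.1 (hV_norm x), NNReal.coe_one]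
  · exact (le_max_left _ _).trans_eq (h_norm x).symm
  · exact (h_norm x).trans_le (h_le x)
  · simp only [hVA ha, Function.comp_apply, max_smul_truncNormalize hc]

lemma AnnulusExtension.lipschitzExtensorOf_sphere [FiniteDimensional ℝ E]
    (h : AnnulusExtension X E) : LipschitzExtensorOf X (sphere (0 : E) 1) := by
  obtain ⟨c, hc, M, C, H⟩ := h 1 one_pos 1
  refine (lipschitzExtensorOf_coe_iff (NormedSpace.sphere_nonempty.2 zero_le_one)).2
    ⟨2 / min c 1 * (C * (2 / 1 * lipschitzExtensionConstant E)), fun A K hK f hfA hf ↦ ?_⟩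
  have hc' : 0 < min c 1 := lt_min hc one_pos
  have hf_norm (a : X) (ha : a ∈ A) : ‖f a‖ = 1 := mem_sphere_zero_iff_norm.1 (hfA ha)
  obtain ⟨F, hF, hfF⟩ := hf.extend_finite_dimension
  have h_eq (a : X) (ha : a ∈ A) : truncNormalize 1 (F a) = f a := by
    rw [← hfF ha, truncNormalize_of_norm_eq_one le_rfl (hf_norm a ha)]
  obtain ⟨G, hG, hcG, -, hGA⟩ := H A (2 / 1 * (lipschitzExtensionConstant E * K))
    (mul_pos (by norm_num) (mul_pos (lipschitzExtensionConstant_pos E) hK))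
    (truncNormalize 1 ∘ F) ((lipschitzWith_truncNormalize one_pos).comp hF)
    (fun x ↦ norm_truncNormalize_le_one 1 _)
    fun a ha ↦ by rw [Function.comp_apply, h_eq a ha, hf_norm a ha, NNReal.coe_one]
  refine ⟨truncNormalize (min c 1) ∘ G,
    ((lipschitzWith_truncNormalize hc').comp hG).weaken (le_of_eq (by ring)), fun x ↦ ?_,
    fun a ha ↦ ?_⟩
  · exact mem_sphere_zero_iff_norm.2 (norm_truncNormalize hc'
      (le_trans (by exact_mod_cast min_le_left c 1) (hcG x)))
  · rw [Function.comp_apply, hGA ha, Function.comp_apply, h_eq a ha,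
      truncNormalize_of_norm_eq_one (min_le_right c 1) (hf_norm a ha)]

lemma lipschitzExtensorOf_sphere_iff [FiniteDimensional ℝ E] :
    LipschitzExtensorOf X (sphere (0 : E) 1) ↔ AnnulusExtension X E :=
  ⟨AnnulusExtension.of_lipschitzExtensorOf_sphere, AnnulusExtension.lipschitzExtensorOf_sphere⟩

end Sphere

section Dimension

variable {X E E' : Type*} [PseudoMetricSpace X] [NormedAddCommGroup E] [NormedSpace ℝ E]
  [NormedAddCommGroup E'] [NormedSpace ℝ E']

lemma AnnulusExtension.congr (h : AnnulusExtension X E) (e : E ≃L[ℝ] E') :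
    AnnulusExtension X E' := by
  intro c hc M
  obtain ⟨a, ha, hea⟩ := (e : E →L[ℝ] E').bound
  obtain ⟨b, hb, heb⟩ := (e.symm : E' →L[ℝ] E).bound
  lift a to ℝ≥0 using ha.le
  lift b to ℝ≥0 using hb.le
  have he : LipschitzWith a e := AddMonoidHomClass.lipschitz_of_bound_nnnorm e a hea
  have he' : LipschitzWith b e.symm := AddMonoidHomClass.lipschitz_of_bound_nnnorm e.symm b heb
  norm_cast at ha hb
  obtain ⟨c', hc', M', C, H⟩ := h (c / a) (by positivity) (b * M)
  refine ⟨c' / b, by positivity, a * M', a * C * b, fun A K hK F hF hFM hFA ↦ ?_⟩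
  obtain ⟨G, hG, hcG, hGM, hGA⟩ := H A (b * K) (by positivity) (e.symm ∘ F) (he'.comp hF)
    (fun x ↦ (heb (F x)).trans (by push_cast; gcongr; exact hFM x)) fun x hx ↦ by
      rw [NNReal.coe_div, div_le_iff₀' (by exact_mod_cast ha)]
      calc (c : ℝ) ≤ ‖e (e.symm (F x))‖ := by rw [e.apply_symm_apply]; exact hFA x hx
        _ ≤ a * ‖(e.symm ∘ F) x‖ := hea _
  refine ⟨e ∘ G, (he.comp hG).weaken (le_of_eq (by ring)), fun x ↦ ?_, fun x ↦ ?_, fun x hx ↦ ?_⟩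
  · rw [NNReal.coe_div, div_le_iff₀' (by exact_mod_cast hb)]
    calc (c' : ℝ) ≤ ‖e.symm (e (G x))‖ := by rw [e.symm_apply_apply]; exact hcG x
      _ ≤ b * ‖(e ∘ G) x‖ := heb _
  · exact (hea (G x)).trans (by push_cast; gcongr; exact hGM x)
  · rw [Function.comp_apply, hGA hx, Function.comp_apply, e.apply_symm_apply]

lemma AnnulusExtension.of_finrank_eq [FiniteDimensional ℝ E] [FiniteDimensional ℝ E']
    (h : AnnulusExtension X E) (hE : finrank ℝ E = finrank ℝ E') : AnnulusExtension X E' :=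
  h.congr (.ofFinrankEq hE)

/-- Near the equator, where the last coordinate is small, only the first coordinate has to be
modified, and it is bounded below there; towards the poles `G` is interpolated back to `F`. -/
lemma AnnulusExtension.prod_real (h : AnnulusExtension X E) : AnnulusExtension X (E × ℝ) := by
  intro c hc M
  obtain ⟨c', hc', M', C, H⟩ := h c hc M
  refine ⟨min c' (c / 2), by positivity, max M' M, 2 / c * (M + M') + (1 + C) + C,
    fun A K hK F hF hFM hFA ↦ ?_⟩
  have hF₁ : LipschitzWith K fun x ↦ (F x).1 :=
    (LipschitzWith.prod_fst.comp hF).weaken (one_mul K).le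
  have hF₂ : LipschitzWith K fun x ↦ (F x).2 :=
    (LipschitzWith.prod_snd.comp hF).weaken (one_mul K).le
  obtain ⟨W, hW, hcW, hWM, hWA⟩ := H {x ∈ A | ‖(F x).2‖ < c} K hK (fun x ↦ (F x).1) hF₁
    (fun x ↦ (norm_fst_le _).trans (hFM x)) fun x hx ↦
      (le_max_iff.1 (hFA x hx.1)).resolve_right hx.2.not_ge
  have hFW (x : X) : ‖(F x).1 - W x‖ ≤ ↑(M + M') :=
    (norm_sub_le _ _).trans (add_le_add ((norm_fst_le _).trans (hFM x)) (hWM x))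
  obtain ⟨Z, hZ, hZ_mem, hZW, hZF⟩ := exists_lipschitzWith_interpolation hc hW hF₁ hF₂ hFW
  have hZM (x : X) : ‖Z x‖ ≤ max (M' : ℝ) M := by
    rw [← mem_closedBall_zero_iff]
    exact (convex_closedBall (0 : E) _).segment_subset
      (mem_closedBall_zero_iff.2 (le_max_of_le_left (hWM x)))
      (mem_closedBall_zero_iff.2 (le_max_of_le_right ((norm_fst_le _).trans (hFM x)))) (hZ_mem x)
  refine ⟨fun x ↦ (Z x, (F x).2), (hZ.prodMk hF₂).weaken (max_le ?_ ?_), fun x ↦ ?_, fun x ↦ ?_,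
    fun x hx ↦ Prod.ext ?_ rfl⟩
  · exact le_of_eq (by ring)
  · calc K = 1 * K := (one_mul K).symm
      _ ≤ _ := by
        gcongr
        exact le_add_right (le_add_left le_self_add)
  · push_cast
    rcases le_total ‖(F x).2‖ (c / 2) with hx | hx
    · exact (min_le_left _ _).trans <| (hcW x).trans <| hZW x hx ▸ norm_fst_le (Z x, (F x).2)
    · exact (min_le_right _ _).trans <| hx.trans <| norm_snd_le (Z x, (F x).2)
  · push_cast
    exact max_le (hZM x) (le_max_of_le_right ((norm_snd_le (F x)).trans (hFM x)))
  · rcases lt_or_ge ‖(F x).2‖ c with hxc | hxc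
    · have := hZ_mem x
      rwa [hWA ⟨hx, hxc⟩, segment_same] at this
    · exact hZF x hxc

lemma AnnulusExtension.of_finrank_le [FiniteDimensional ℝ E] [FiniteDimensional ℝ E']
    (h : AnnulusExtension X E) (hE : finrank ℝ E ≤ finrank ℝ E') : AnnulusExtension X E' := by
  have h_pi : AnnulusExtension X (Fin (finrank ℝ E') → ℝ) := by
    generalize finrank ℝ E' = m at hE ⊢
    induction m, hE using Nat.le_induction with
    | base => exact h.of_finrank_eq (finrank_fin_fun ℝ).symm
    | succ k _ ih =>
      exact ih.prod_real.of_finrank_eq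
        (by rw [finrank_prod, finrank_self, finrank_fin_fun, finrank_fin_fun])
  exact h_pi.of_finrank_eq (finrank_fin_fun ℝ)

lemma AnnulusExtension.of_coloredPartition {ι : Type*} [Fintype ι] [FiniteDimensional ℝ E]
    (hι : Fintype.card ι ≤ finrank ℝ E) {C : ℝ≥0} (hC : 0 < C)
    (hX : ∀ s : ℝ≥0, 0 < s → Nonempty (ColoredPartition ι X s C)) : AnnulusExtension X E := by
  intro c hc M
  have hc4 : 0 < c / 4 := by positivity
  obtain ⟨δ, hδ, C', H⟩ := exists_lipschitzWith_norm_sub_le_and_le_norm hι hC hX M hc4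
  refine ⟨min δ (c / 4), by positivity, M + c / 4, 2 / c * (c / 4) + (1 + C') + C',
    fun A K hK F hF hFM hFA ↦ ?_⟩
  obtain ⟨G, hG, hFG, hδG⟩ := H K hK F hF hFM
  obtain ⟨Z, hZ, hZ_mem, hZG, hZF⟩ := exists_lipschitzWith_interpolation hc hG hF hF hFG
  have hFZ (x : X) : ‖F x - Z x‖ ≤ ↑(c / 4) := by
    rw [← mem_closedBall_iff_norm']
    exact (convex_closedBall (F x) _).segment_subset (mem_closedBall_iff_norm'.2 (hFG x))
      (mem_closedBall_self (c / 4).2) (hZ_mem x)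
  push_cast at hFZ
  refine ⟨Z, hZ.weaken (le_of_eq (by ring)), fun x ↦ ?_, fun x ↦ ?_, fun x hx ↦
    hZF x (hFA x hx)⟩
  · push_cast
    rcases le_total ‖F x‖ (c / 2) with hx | hx
    · exact hZG x hx ▸ (min_le_left _ _).trans (hδG x)
    · refine (min_le_right _ _).trans ?_
      linarith [norm_sub_norm_le (F x) (Z x), hFZ x]
  · push_cast
    linarith [norm_le_norm_add_norm_sub (F x) (Z x), hFM x, hFZ x]

end Dimension

/-! ### Gaps -/

/-- The coordinates of `v` in `S` exceed all the others by at least `g`. -/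
def IsGap {ι : Type*} (v : ι → ℝ) (g : ℝ) (S : Finset ι) : Prop :=
  ∀ i ∈ S, ∀ j ∉ S, v j + g ≤ v i

lemma exists_isGap {ι : Type*} [Fintype ι] {v : ι → ℝ} {g : ℝ} (hg : 0 ≤ g) {a b : ι}
    (hab : Fintype.card ι * g < v b - v a) : ∃ S : Finset ι, b ∈ S ∧ a ∉ S ∧ IsGap v g S := by
  classical
  let T (k : ℕ) : Finset ι := {i | v a + k * g < v i}
  have hT_mem {k : ℕ} {i : ι} : i ∈ T k ↔ v a + k * g < v i := by
    simp only [T, Finset.mem_filter_univ]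
  have hT_anti : Antitone T := fun k l hkl i hi ↦ hT_mem.2 <| lt_of_le_of_lt
    (by gcongr) (hT_mem.1 hi)
  obtain ⟨k, hk, hTk⟩ : ∃ k < Fintype.card ι, T k = T (k + 1) := by
    by_contra! h
    have h_card (k : ℕ) (hk : k ≤ Fintype.card ι) : (T k).card + k ≤ Fintype.card ι := by
      induction k with
      | zero => exact Finset.card_le_univ _
      | succ k ih =>
        have := Finset.card_lt_card ((hT_anti (Nat.le_add_right k 1)).lt_of_ne (h k hk).symm)
        have := ih (by omega)
        omega
    have hb : b ∈ T (Fintype.card ι) := hT_mem.2 (by linarith)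
    have := Finset.card_pos.2 ⟨b, hb⟩
    have := h_card _ le_rfl
    omega
  refine ⟨T k, hT_anti hk.le (hT_mem.2 (by linarith)), fun ha ↦ ?_, fun i hi j hj ↦ ?_⟩
  · have := hT_mem.1 ha
    have : 0 ≤ k * g := by positivity
    linarith
  · rw [hTk, hT_mem] at hi
    rw [hT_mem] at hj
    push_cast at hi
    linarith

lemma IsGap.eq_of_card_eq {ι : Type*} [Fintype ι] {v w : ι → ℝ} {g : ℝ} {S T : Finset ι}
    (hS : IsGap v g S) (hT : IsGap w g T) (hvw : dist v w < g) (hcard : S.card = T.card) :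
    S = T := by
  by_contra hST
  obtain ⟨i, hiS, hiT⟩ := Finset.not_subset.1 fun h ↦
    hST (Finset.eq_of_subset_of_card_le h hcard.ge)
  obtain ⟨j, hjT, hjS⟩ := Finset.not_subset.1 fun h ↦
    hST (Finset.eq_of_subset_of_card_le h hcard.le).symm
  have hi := (le_abs_self _).trans ((dist_le_pi_dist v w i).trans_lt hvw).le
  have hj := (neg_le_abs _).trans_lt ((dist_le_pi_dist v w j).trans_lt hvw)
  linarith [hS i hiS j hjS, hT j hjT i hiT]

lemma IsGap.exists_lt {ι : Type*} [Fintype ι] {v : ι → ℝ} {g : ℝ} {S : Finset ι}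
    (hS : IsGap v g S) (hg : 0 < g) (hcard : S.card < Fintype.card ι) {i : ι} (hi : i ∈ S) :
    ∃ j, v j < v i := by
  obtain ⟨j, -, hj⟩ := Finset.exists_mem_notMem_of_card_lt_card hcard
  exact ⟨j, by linarith [hS i hi j hj]⟩

lemma lipschitzWith_fin_cons_zero {m : ℕ} {X : Type*} [PseudoMetricSpace X] {K : ℝ≥0}
    {V : X → Fin m → ℝ} (hV : LipschitzWith K V) :
    LipschitzWith K fun x ↦ (Fin.cons 0 (V x) : Fin (m + 1) → ℝ) := by
  refine .of_dist_le_mul fun x y ↦ (dist_pi_le_iff (by positivity)).2 fun i ↦ ?_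
  induction i using Fin.cases with
  | zero => rw [Fin.cons_zero, Fin.cons_zero, dist_self]; positivity
  | succ k =>
    rw [Fin.cons_succ, Fin.cons_succ]
    exact (dist_le_pi_dist _ _ k).trans (hV.dist_le_mul x y)

lemma exists_lt_fin_cons_zero_sub {m : ℕ} {u : Fin m → ℝ} {g : ℝ} (hg : 0 ≤ g) (hu : g < ‖u‖) :
    ∃ a b, g < (Fin.cons 0 u : Fin (m + 1) → ℝ) b - (Fin.cons 0 u : Fin (m + 1) → ℝ) a := by
  obtain ⟨k, hk⟩ : ∃ k, g < |u k| := by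
    by_contra! h
    exact hu.not_ge ((pi_norm_le_iff_of_nonneg hg).2 h)
  rcases lt_abs.1 hk with hk | hk
  · exact ⟨0, k.succ, by rwa [Fin.cons_zero, Fin.cons_succ, sub_zero]⟩
  · exact ⟨k.succ, 0, by rwa [Fin.cons_zero, Fin.cons_succ, zero_sub]⟩

namespace ColoredPartition

section GapCover

variable {ι X : Type*} [Fintype ι] [PseudoMetricSpace X] {s C : ℝ≥0}
  (P : ColoredPartition ι X s C)

/-- The points where `S` is a gap of `v` and the centres of the colours in `S` are given by `z`;
the values of `z` outside `S` are irrelevant. -/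
def gapCell (v : X → ι → ℝ) (g : ℝ) (S : Finset ι) (z : ι → X) : Set X :=
  {x | IsGap (v x) g S ∧ ∀ i ∈ S, P.center i x = z i}

/-- Gaps of a given size vary locally constantly, and a proper gap of size `k` only involves
colours of positive weight; so the gap cells of size `k` can serve as the family of colour `k`.
There are only `m` possible sizes for `m + 1` colours, which is why one colour is saved. -/
lemma exists_isNagataCover {m : ℕ} (hι : Fintype.card ι = m + 1) {v : X → ι → ℝ} {L : ℝ≥0}
    (hv : LipschitzWith L v) {g r : ℝ} (hg : 0 < g) (hLr : L * r < g) (hrs : r ≤ s)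
    (h_zero : ∀ x i, P.weight i x = 0 → ∀ j, v x i ≤ v x j)
    (h_spread : ∀ x, ∃ a b, Fintype.card ι * g < v x b - v x a) :
    ∃ U : Fin m → Set (Set X), IsNagataCover U r (2 * (C * s)) := by
  have h_ne {S : Finset ι} (hS : S.card ≤ m) {x : X} (hx : IsGap (v x) g S) {i : ι} (hi : i ∈ S) :
      P.weight i x ≠ 0 := fun h ↦
    let ⟨j, hj⟩ := hx.exists_lt hg (by omega) hi
    hj.not_ge (h_zero x i h j)
  refine ⟨fun k ↦ {V | ∃ S : Finset ι, S.card = k + 1 ∧ ∃ z, P.gapCell v g S z = V},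
    fun x ↦ ?_, ?_, ?_⟩
  · obtain ⟨a, b, hab⟩ := h_spread x
    obtain ⟨S, hb, ha, hS⟩ := exists_isGap hg.le hab
    have h_pos := Finset.card_pos.2 ⟨b, hb⟩
    have h_lt := Finset.card_lt_univ_of_notMem ha
    exact ⟨⟨S.card - 1, by omega⟩, _, ⟨S, by simp only; omega, fun i ↦ P.center i x, rfl⟩, hS,
      fun _ _ ↦ rfl⟩
  · rintro k _ ⟨S, hSk, z, rfl⟩ _ ⟨T, hTk, z', rfl⟩ hne x hx y hy
    by_contra! hxy
    have hST : S = T := hx.1.eq_of_card_eq hy.1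
      (((hv.dist_le_mul x y).trans (by gcongr)).trans_lt hLr) (hSk.trans hTk.symm)
    subst hST
    have hz (i : ι) (hi : i ∈ S) : z i = z' i := by
      rw [← hx.2 i hi, ← hy.2 i hi]
      exact P.center_eq (h_ne (by omega) hx.1 hi) (h_ne (by omega) hy.1 hi) (hxy.trans hrs)
    exact hne (by ext; simp +contextual only [gapCell, mem_ofPred_eq, hz])
  · rintro k _ ⟨S, hSk, z, rfl⟩ x hx y hy
    obtain ⟨i, hi⟩ : S.Nonempty := Finset.card_pos.1 (by omega)
    calc dist x y ≤ dist x (P.center i x) + dist y (P.center i y) := by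
          rw [hx.2 i hi, hy.2 i hi]
          exact dist_triangle_right _ _ _
      _ ≤ C * s + C * s := add_le_add (P.dist_center_le (h_ne (by omega) hx.1 hi))
          (P.dist_center_le (h_ne (by omega) hy.1 hi))
      _ = 2 * (C * s) := (two_mul _).symm

end GapCover

section RelWeight

variable {m : ℕ} {X : Type*} [PseudoMetricSpace X] {s C : ℝ≥0}
  (P : ColoredPartition (Fin (m + 1)) X s C)

/-- The differences of the weights with the weight of colour `0`. They determine the weights, and
are bounded away from the origin where some weight vanishes. -/
def relWeight (x : X) (k : Fin m) : ℝ := P.weight k.succ x - P.weight 0 x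

lemma lipschitzWith_relWeight : LipschitzWith (2 * (C / s)) P.relWeight := by
  refine .of_dist_le_mul fun x y ↦ (dist_pi_le_iff (by positivity)).2 fun k ↦ ?_
  have := ((P.lipschitzWith_weight k.succ).sub (P.lipschitzWith_weight 0)).dist_le_mul x y
  rwa [← two_mul] at this

lemma norm_relWeight_le_one (x : X) : ‖P.relWeight x‖ ≤ 1 := by
  refine (pi_norm_le_iff_of_nonneg zero_le_one).2 fun k ↦ ?_
  have h (i : Fin (m + 1)) : P.weight i x ≤ 1 := (le_abs_self _).trans (P.norm_weight_le_one i x)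
  exact abs_sub_le_of_nonneg_of_le (P.weight_nonneg _ x) (h _) (P.weight_nonneg _ x) (h _)

lemma weight_eq_relWeight_add (x : X) (i : Fin (m + 1)) :
    P.weight i x = (Fin.cons 0 (P.relWeight x) : Fin (m + 1) → ℝ) i + P.weight 0 x := by
  induction i using Fin.cases with
  | zero => rw [Fin.cons_zero, zero_add]
  | succ k => rw [Fin.cons_succ, relWeight, sub_add_cancel]

lemma inv_le_norm_relWeight {x : X} {i : Fin (m + 1)} (hi : P.weight i x = 0) :
    (2 * (m + 1 : ℝ))⁻¹ ≤ ‖P.relWeight x‖ := by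
  have h_abs (j : Fin (m + 1)) :
      |(Fin.cons 0 (P.relWeight x) : Fin (m + 1) → ℝ) j| ≤ ‖P.relWeight x‖ := by
    induction j using Fin.cases with
    | zero => rw [Fin.cons_zero, abs_zero]; exact norm_nonneg _
    | succ k => exact norm_le_pi_norm (P.relWeight x) k
  have h_le (j : Fin (m + 1)) : P.weight j x ≤ 2 * ‖P.relWeight x‖ := by
    linarith [P.weight_eq_relWeight_add x i, P.weight_eq_relWeight_add x j,
      neg_le_of_abs_le (h_abs i), le_of_abs_le (h_abs j)]
  have h_sum := Finset.sum_le_card_nsmul Finset.univ _ _ fun j _ ↦ h_le j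
  rw [P.sum_weight, Finset.card_univ, Fintype.card_fin, nsmul_eq_mul] at h_sum
  rw [inv_le_iff_one_le_mul₀ (by positivity)]
  push_cast at h_sum
  linarith

lemma exists_isNagataCover_of_eqOn_relWeight {V : X → Fin m → ℝ} {L : ℝ≥0}
    (hV : LipschitzWith L V) (hVP : EqOn V P.relWeight {x | ∃ i, P.weight i x = 0}) {g r : ℝ}
    (hg : 0 < g) (hgV : ∀ x, (m + 1 : ℕ) * g < ‖V x‖) (hLr : L * r < g) (hrs : r ≤ s) :
    ∃ U : Fin m → Set (Set X), IsNagataCover U r (2 * (C * s)) := by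
  refine P.exists_isNagataCover (Fintype.card_fin _) (lipschitzWith_fin_cons_zero hV) hg hLr hrs
    (fun x i hi j ↦ ?_) fun x ↦ ?_
  · rw [hVP ⟨i, hi⟩]
    linarith [P.weight_eq_relWeight_add x i, P.weight_eq_relWeight_add x j, P.weight_nonneg j x]
  · rw [Fintype.card_fin]
    exact exists_lt_fin_cons_zero_sub (by positivity) (hgV x)

end RelWeight

end ColoredPartition

lemma NagataDimLE.of_succ {X : Type*} [MetricSpace X] {n : ℕ} (h : NagataDimLE X (n + 1))
    (hX : AnnulusExtension X (Fin (n + 1) → ℝ)) : NagataDimLE X n := by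
  obtain ⟨C, hC, hP⟩ := h.exists_coloredPartition
  obtain ⟨c', hc', M', C', H⟩ := hX (2 * ((n + 1 : ℕ) + 1))⁻¹ (by positivity) 1
  let g : ℝ≥0 := c' / (n + 3)
  have hg : 0 < g := by positivity
  -- `l` is large enough for the modified weights at scale `l * r` to vary by less than `g` at
  -- scale `r`.
  let l : ℝ≥0 := 1 + C' * (2 * C) / g
  have hgc : (n + 1 + 1 : ℕ) * (g : ℝ) < c' := by
    simp only [g]
    push_cast
    rw [mul_div_assoc', div_lt_iff₀ (by positivity)]
    nlinarith [NNReal.coe_pos.2 hc']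
  refine nagataDimLE_iff.2 ⟨2 * (C * l), by positivity, fun r hr ↦ ?_⟩
  lift r to ℝ≥0 using hr.le
  norm_cast at hr
  have hs : 0 < l * r := by positivity
  obtain ⟨P⟩ := hP (l * r) hs
  obtain ⟨V, hV, hcV, -, hVA⟩ := H {x | ∃ i, P.weight i x = 0} (2 * (C / (l * r)))
    (by positivity) P.relWeight P.lipschitzWith_relWeight P.norm_relWeight_le_one
    fun x ⟨i, hi⟩ ↦ by simpa using P.inv_le_norm_relWeight hi
  have hLr : ↑(C' * (2 * (C / (l * r)))) * (r : ℝ) < g := by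
    norm_cast
    calc C' * (2 * (C / (l * r))) * r = C' * (2 * C) / l := by field_simp
      _ < g := by
        rw [div_lt_iff₀ (by positivity), mul_add, mul_div_cancel₀ _ hg.ne', mul_one]
        exact lt_add_of_pos_left _ hg
  have hrs : r ≤ l * r := le_mul_of_one_le_left zero_le le_self_add
  obtain ⟨U, hU⟩ := P.exists_isNagataCover_of_eqOn_relWeight hV hVA (NNReal.coe_pos.2 hg)
    (fun x ↦ hgc.trans_le (hcV x)) hLr (NNReal.coe_le_coe.2 hrs)
  exact ⟨U, by convert hU using 1; push_cast; ring⟩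

theorem sphere_extensor_iff_nagata_of_finite_nagata_general {X E : Type*} [MetricSpace X]
    [NormedAddCommGroup E] [NormedSpace ℝ E] [FiniteDimensional ℝ E] {N n : ℕ}
    (hN : NagataDimLE X N) (hE : finrank ℝ E = n + 1) :
    LipschitzExtensorOf X (sphere (0 : E) 1) ↔ NagataDimLE X n := by
  have : Nontrivial E := nontrivial_of_finrank_pos (R := ℝ) (by omega)
  rw [lipschitzExtensorOf_sphere_iff]
  constructor
  · intro h
    have h_descend (m : ℕ) (hnm : n ≤ m) (hm : NagataDimLE X m) : NagataDimLE X n := by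
      induction m, hnm using Nat.le_induction with
      | base => exact hm
      | succ m hnm ih =>
        refine ih (hm.of_succ (h.of_finrank_le ?_))
        rw [hE, finrank_fin_fun]
        exact Nat.succ_le_succ hnm
    exact h_descend (max n N) (le_max_left n N) (hN.mono (le_max_right n N))
  · intro h
    obtain ⟨C, hC, hP⟩ := h.exists_coloredPartition
    exact .of_coloredPartition (by rw [hE, Fintype.card_fin]) hC hP

theorem sphere_extensor_iff_nagata_of_finite_nagata
    {X : Type*} [MetricSpace X] (N : ℕ) (hN : NagataDimLE X N) (n : ℕ) :
    LipschitzExtensorOf X (Metric.sphere (0 : EuclideanSpace ℝ (Fin (n + 1))) 1) ↔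
      NagataDimLE X n :=
  sphere_extensor_iff_nagata_of_finite_nagata_general hN finrank_euclideanSpace_fin
end

section
/- For a metric space X and integer m ≥ 0 the following are equivalent: (a) S^m is a large scale Lipschitz extensor of X; (b) there are constants t, M > 0 such that every cover U = {U_0,…,U_{m+1}} of X by m+2 subsets which is r-Lebesgue for some r > M admits a (t·r)-Lebesgue refinement V of multiplicity at most m+1. -/
/-- A metric space `E` is a large scale Lipschitz extensor of `X`: there are `C, M > 0` such
that every `λ`-Lipschitz map on a nonempty subset of `X` with `0 < λ < M` extends to a
`(C·λ)`-Lipschitz map on `X`. -/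
def LargeScaleLipschitzExtensorOf (X E : Type*) [MetricSpace X] [MetricSpace E] : Prop :=
  ∃ C : ℝ, 0 < C ∧ ∃ M : ℝ, 0 < M ∧ ∀ A : Set X, A.Nonempty →
    ∀ lam : ℝ, 0 < lam → lam < M →
      ∀ f : A → E, (∀ a b : A, dist (f a) (f b) ≤ lam * dist (a : X) (b : X)) →
        ∃ g : X → E, (∀ a : A, g a = f a) ∧
          ∀ x y : X, dist (g x) (g y) ≤ C * lam * dist x y

/-- A metric space `E` is a small scale Lipschitz extensor of `X`: there are `C, M > 0` such
that every `λ`-Lipschitz map on a nonempty subset of `X` with `λ > M` extends to a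
`(C·λ)`-Lipschitz map on `X`. -/
def SmallScaleLipschitzExtensorOf (X E : Type*) [MetricSpace X] [MetricSpace E] : Prop :=
  ∃ C : ℝ, 0 < C ∧ ∃ M : ℝ, 0 < M ∧ ∀ A : Set X, A.Nonempty →
    ∀ lam : ℝ, M < lam →
      ∀ f : A → E, (∀ a b : A, dist (f a) (f b) ≤ lam * dist (a : X) (b : X)) →
        ∃ g : X → E, (∀ a : A, g a = f a) ∧
          ∀ x y : X, dist (g x) (g y) ≤ C * lam * dist x y
/-- The multiplicity of a family `V` of subsets of `X` is at most `m`. -/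
def MultiplicityLE {X : Type*} [MetricSpace X] (V : Set (Set X)) (m : ℕ) : Prop :=
  ∀ x : X, {W | W ∈ V ∧ x ∈ interior W}.Finite ∧ {W | W ∈ V ∧ x ∈ interior W}.ncard ≤ m

/-!
Any unit sphere in a normed space of dimension `card ι - 1` is bi-Lipschitz to the set
`cubeEquator ι` of vectors in `ℝ^ι` with minimum `0` and maximum `1`: project `ℝ^ι` along the
constants and normalize. A Lipschitz map to `cubeEquator ι` amounts, up to constants, to a cover
indexed by `ι` with large Lebesgue number in which no point lies in all members: such a cover
arises from the supports of the coordinates, and the truncated distances to the complements lead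
back. A family with `n + 1` members has multiplicity at most `n` exactly when no point lies in all
of them.

Given a cover, the extensor property is applied to its depth functions on the set where some of
them vanishes. Conversely, extend `f` coordinatewise, keeping the maximum equal to `1`; this stays
in `cubeEquator ι` near the domain of `f`. A refinement of the cover by supports of the extension
gives a map to `cubeEquator ι` defined everywhere, to which the extension is deformed as the
distance from the domain of `f` grows.
-/

open Set Metric
open scoped NNReal

section Lipschitz

theorem lipschitzWith_pi_iff {α ι : Type*} {E : ι → Type*} [PseudoMetricSpace α] [Fintype ι]
    [∀ i, PseudoMetricSpace (E i)] {f : α → ∀ i, E i} {K : ℝ≥0} :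
    LipschitzWith K f ↔ ∀ i, LipschitzWith K fun x => f x i := by
  simp only [lipschitzWith_iff_dist_le_mul, dist_pi_le_iff (mul_nonneg K.coe_nonneg dist_nonneg)]
  exact ⟨fun h i x y => h x y i, fun h x y i => h i x y⟩

theorem lipschitzWith_iSup {ι : Type*} [Fintype ι] [Nonempty ι] :
    LipschitzWith 1 fun u : ι → ℝ => ⨆ i, u i := by
  refine .of_le_add fun u v => ciSup_le fun i => ?_
  have huv : u i - v i ≤ dist u v := (le_abs_self _).trans (dist_le_pi_dist u v i)
  linarith [le_ciSup (finite_range v).bddAbove i]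

theorem ball_div_subset_pos_of_lipschitzWith {α : Type*} [PseudoMetricSpace α] {f : α → ℝ} {K : ℝ≥0}
    (hf : LipschitzWith K f) (x : α) : ball x (f x / K) ⊆ {y | 0 < f y} := by
  intro y hy
  rw [mem_ball'] at hy
  have hK : (0 : ℝ) < K := K.coe_nonneg.lt_of_ne fun h => by
    rw [← h, div_zero] at hy
    exact hy.not_ge dist_nonneg
  rw [lt_div_iff₀' hK] at hy
  have hxy : f x - f y ≤ K * dist x y := (le_abs_self _).trans (hf.dist_le_mul x y)
  rw [mem_ofPred_eq]
  linarith

theorem norm_inv_smul_sub_inv_smul_le {E : Type*} [SeminormedAddCommGroup E] [NormedSpace ℝ E]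
    {a b c : ℝ} {v w : E} (hc : 0 < c) (ha : c ≤ a) (hb : c ≤ b) (hw : ‖w‖ ≤ b) :
    ‖a⁻¹ • v - b⁻¹ • w‖ ≤ c⁻¹ * (‖v - w‖ + |a - b|) := by
  have ha₀ : 0 < a := hc.trans_le ha
  have hb₀ : 0 < b := hc.trans_le hb
  have hinv : a⁻¹ * (b - a) = (a⁻¹ - b⁻¹) * b := by field_simp
  have hscale : ‖(a⁻¹ - b⁻¹) • w‖ ≤ a⁻¹ * |a - b| :=
    calc ‖(a⁻¹ - b⁻¹) • w‖ ≤ |a⁻¹ - b⁻¹| * b := by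
          rw [norm_smul, Real.norm_eq_abs]; gcongr
      _ = |(a⁻¹ - b⁻¹) * b| := by rw [abs_mul, abs_of_pos hb₀]
      _ = a⁻¹ * |a - b| := by
          rw [← hinv, abs_mul, abs_of_pos (inv_pos.2 ha₀), abs_sub_comm]
  calc ‖a⁻¹ • v - b⁻¹ • w‖ = ‖a⁻¹ • (v - w) + (a⁻¹ - b⁻¹) • w‖ := by
        congr 1; module
    _ ≤ a⁻¹ * ‖v - w‖ + a⁻¹ * |a - b| := by
        refine norm_add_le_of_le ?_ hscale
        rw [norm_smul, Real.norm_of_nonneg (inv_pos.2 ha₀).le]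
    _ ≤ c⁻¹ * (‖v - w‖ + |a - b|) := by
        rw [← mul_add]; gcongr

theorem lipschitzWith_inv_smul {α E : Type*} [PseudoMetricSpace α] [SeminormedAddCommGroup E]
    [NormedSpace ℝ E] {f : α → E} {p : α → ℝ} {Kf Kp c : ℝ≥0} (hf : LipschitzWith Kf f)
    (hp : LipschitzWith Kp p) (hc : 0 < c) (hcp : ∀ x, c ≤ p x) (hfp : ∀ x, ‖f x‖ ≤ p x) :
    LipschitzWith (c⁻¹ * (Kf + Kp)) fun x => (p x)⁻¹ • f x := by
  refine .of_dist_le_mul fun x y => ?_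
  have hfxy := hf.dist_le_mul x y
  have hpxy := hp.dist_le_mul x y
  rw [dist_eq_norm] at hfxy hpxy
  rw [dist_eq_norm]
  calc ‖(p x)⁻¹ • f x - (p y)⁻¹ • f y‖ ≤ (c : ℝ)⁻¹ * (‖f x - f y‖ + |p x - p y|) :=
        norm_inv_smul_sub_inv_smul_le (by exact_mod_cast hc) (hcp x) (hcp y) (hfp y)
    _ ≤ (c : ℝ)⁻¹ * (Kf * dist x y + Kp * dist x y) := by gcongr; exact hpxy
    _ = ↑(c⁻¹ * (Kf + Kp)) * dist x y := by push_cast; ring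

end Lipschitz

section LargeScaleExtensor

variable {X E F : Type*} [MetricSpace X] [MetricSpace E] [MetricSpace F]

theorem largeScaleLipschitzExtensorOf_iff_lipschitzWith :
    LargeScaleLipschitzExtensorOf X E ↔ ∃ C M : ℝ≥0, 0 < M ∧
      ∀ A : Set X, A.Nonempty → ∀ K : ℝ≥0, 0 < K → K < M → ∀ f : A → E, LipschitzWith K f →
        ∃ g : X → E, (∀ a : A, g a = f a) ∧ LipschitzWith (C * K) g := by
  constructor
  · rintro ⟨C, hC, M, hM, H⟩
    lift C to ℝ≥0 using hC.le
    lift M to ℝ≥0 using hM.le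
    refine ⟨C, M, mod_cast hM, fun A hA K hK hKM f hf => ?_⟩
    obtain ⟨g, hgf, hg⟩ := H A hA K (mod_cast hK) (mod_cast hKM) f hf.dist_le_mul
    exact ⟨g, hgf, .of_dist_le_mul fun x y => by exact_mod_cast hg x y⟩
  · rintro ⟨C, M, hM, H⟩
    refine ⟨C + 1, by positivity, M, mod_cast hM, fun A hA K hK hKM f hf => ?_⟩
    lift K to ℝ≥0 using hK.le
    obtain ⟨g, hgf, hg⟩ :=
      H A hA K (mod_cast hK) (mod_cast hKM) f (.of_dist_le_mul hf)
    refine ⟨g, hgf, fun x y => (hg.dist_le_mul x y).trans ?_⟩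
    push_cast
    gcongr
    linarith

theorem LargeScaleLipschitzExtensorOf.of_leftInverse (h : LargeScaleLipschitzExtensorOf X E)
    {φ : E → F} {ψ : F → E} {Kφ Kψ : ℝ≥0} (hφ : LipschitzWith Kφ φ) (hψ : LipschitzWith Kψ ψ)
    (hφψ : Function.LeftInverse φ ψ) : LargeScaleLipschitzExtensorOf X F := by
  rw [largeScaleLipschitzExtensorOf_iff_lipschitzWith] at h ⊢
  obtain ⟨C, M, hM, H⟩ := h
  have hψ' : LipschitzWith (Kψ + 1) ψ := hψ.weaken le_self_add
  refine ⟨Kφ * C * (Kψ + 1), M / (Kψ + 1), by positivity, fun A hA K hK hKM f hf => ?_⟩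
  rw [lt_div_iff₀' (by positivity)] at hKM
  obtain ⟨g, hgf, hg⟩ := H A hA ((Kψ + 1) * K) (by positivity) hKM (ψ ∘ f) (hψ'.comp hf)
  refine ⟨φ ∘ g, fun a => ?_, (hφ.comp hg).weaken (le_of_eq (by ring))⟩
  rw [Function.comp_apply, hgf, Function.comp_apply, hφψ]

theorem largeScaleLipschitzExtensorOf_congr {φ : E → F} {ψ : F → E} {Kφ Kψ : ℝ≥0}
    (hφ : LipschitzWith Kφ φ) (hψ : LipschitzWith Kψ ψ) (hφψ : Function.LeftInverse φ ψ)
    (hψφ : Function.LeftInverse ψ φ) :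
    LargeScaleLipschitzExtensorOf X E ↔ LargeScaleLipschitzExtensorOf X F :=
  ⟨fun h => h.of_leftInverse hφ hψ hφψ, fun h => h.of_leftInverse hψ hφ hψφ⟩

end LargeScaleExtensor

section Cube

/-- The vectors in `[0, 1]^ι` with largest coordinate `1`, that is, the union of the faces `u i = 1`
of the cube. -/
def cubeRoof (ι : Type*) : Set (ι → ℝ) :=
  {u | (∀ i, u i ∈ Icc 0 1) ∧ ∃ i, u i = 1}

/-- The vectors in `[0, 1]^ι` with smallest coordinate `0` and largest coordinate `1`, a piecewise
linear sphere of dimension `card ι - 2`. The supports `{x | 0 < f x i}` of the coordinates of a map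
`f` to it cover the domain, and no point lies in all of them. -/
def cubeEquator (ι : Type*) : Set (ι → ℝ) :=
  {u ∈ cubeRoof ι | ∃ i, u i = 0}

/-- The distance of each coordinate of `u` from the largest one. -/
noncomputable def topGap {ι : Type*} (u : ι → ℝ) (i : ι) : ℝ :=
  (⨆ j, u j) - u i

/-- The difference between the largest and the smallest coordinate of `u`. -/
noncomputable def spread {ι : Type*} (u : ι → ℝ) : ℝ :=
  ⨆ i, topGap u i

/-- The Lipschitz map to `cubeRoof ι` that, on vectors of spread at least `c`, is the retraction
onto `cubeEquator ι` rescaling the coordinates affinely to the range `[0, 1]`. -/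
noncomputable def equatorRetract {ι : Type*} (c : ℝ) (u : ι → ℝ) : ι → ℝ :=
  1 - (max (spread u) c)⁻¹ • topGap u

theorem cubeEquator_nonempty {ι : Type*} [Nontrivial ι] : (cubeEquator ι).Nonempty := by
  classical
  obtain ⟨i, j, hij⟩ := exists_pair_ne ι
  refine ⟨Pi.single i 1, ⟨fun k => ?_, i, Pi.single_eq_same i 1⟩, j, Pi.single_eq_of_ne' hij 1⟩
  rw [Pi.single_apply]
  split_ifs <;> simp

section Order

variable {ι : Type*} [Finite ι]

theorem topGap_nonneg (u : ι → ℝ) (i : ι) : 0 ≤ topGap u i :=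
  sub_nonneg.2 (le_ciSup (finite_range u).bddAbove i)

theorem topGap_le_spread (u : ι → ℝ) (i : ι) : topGap u i ≤ spread u :=
  le_ciSup (finite_range (topGap u)).bddAbove i

variable [Nonempty ι]

theorem spread_nonneg (u : ι → ℝ) : 0 ≤ spread u :=
  (topGap_nonneg u (Classical.arbitrary ι)).trans (topGap_le_spread u _)

theorem exists_topGap_eq_zero (u : ι → ℝ) : ∃ i, topGap u i = 0 := by
  obtain ⟨i, hi⟩ := exists_eq_ciSup_of_finite (f := u)
  exact ⟨i, sub_eq_zero.2 hi.symm⟩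

theorem exists_topGap_eq_spread (u : ι → ℝ) : ∃ i, topGap u i = spread u :=
  exists_eq_ciSup_of_finite

theorem topGap_mul_add {a : ℝ} (ha : 0 ≤ a) (u : ι → ℝ) (b : ℝ) :
    topGap (fun i => a * u i + b) = a • topGap u := by
  ext i
  simp only [topGap, Pi.smul_apply, smul_eq_mul]
  rw [← ciSup_add (finite_range fun i => a * u i).bddAbove, ← Real.mul_iSup_of_nonneg ha]
  ring

theorem spread_mul_add {a : ℝ} (ha : 0 ≤ a) (u : ι → ℝ) (b : ℝ) :
    spread (fun i => a * u i + b) = a * spread u := by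
  simp only [spread, topGap_mul_add ha, Pi.smul_apply, smul_eq_mul, Real.mul_iSup_of_nonneg ha]

theorem topGap_of_mem_cubeRoof {u : ι → ℝ} (hu : u ∈ cubeRoof ι) : topGap u = 1 - u := by
  obtain ⟨hu01, i₁, hi₁⟩ := hu
  have hsup : ⨆ j, u j = 1 :=
    le_antisymm (ciSup_le fun j => (hu01 j).2) (hi₁ ▸ le_ciSup (finite_range u).bddAbove i₁)
  ext i
  rw [topGap, hsup, Pi.sub_apply, Pi.one_apply]

theorem spread_of_mem_cubeEquator {u : ι → ℝ} (hu : u ∈ cubeEquator ι) : spread u = 1 := by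
  obtain ⟨hroof, i₀, hi₀⟩ := hu
  have hgap (i : ι) : topGap u i = 1 - u i := congrFun (topGap_of_mem_cubeRoof hroof) i
  refine le_antisymm (ciSup_le fun i => ?_) ?_
  · linarith [hgap i, (hroof.1 i).1]
  · linarith [hgap i₀, topGap_le_spread u i₀]

theorem equatorRetract_mem_cubeRoof {c : ℝ} (hc : 0 < c) (u : ι → ℝ) :
    equatorRetract c u ∈ cubeRoof ι := by
  have hmax : 0 < max (spread u) c := lt_max_of_lt_right hc
  refine ⟨fun i => ?_, ?_⟩
  · have hgap : (max (spread u) c)⁻¹ * topGap u i ≤ 1 := by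
      rw [inv_mul_le_one₀ hmax]
      exact (topGap_le_spread u i).trans (le_max_left _ _)
    have hgap₀ : 0 ≤ (max (spread u) c)⁻¹ * topGap u i :=
      mul_nonneg (inv_nonneg.2 hmax.le) (topGap_nonneg u i)
    simpa [equatorRetract] using ⟨hgap, hgap₀⟩
  · obtain ⟨i, hi⟩ := exists_topGap_eq_zero u
    exact ⟨i, by simp [equatorRetract, hi]⟩

theorem equatorRetract_mem_cubeEquator {c : ℝ} {u : ι → ℝ} (hc : 0 < c) (hu : c ≤ spread u) :
    equatorRetract c u ∈ cubeEquator ι := by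
  obtain ⟨i, hi⟩ := exists_topGap_eq_spread u
  refine ⟨equatorRetract_mem_cubeRoof hc u, i, ?_⟩
  simp [equatorRetract, hi, max_eq_left hu, (hc.trans_le hu).ne']

theorem equatorRetract_mul_add {a c : ℝ} {u : ι → ℝ} (hu : u ∈ cubeEquator ι) (hc : 0 < c)
    (hca : c ≤ a) (b : ℝ) : equatorRetract c (fun i => a * u i + b) = u := by
  have ha : 0 < a := hc.trans_le hca
  rw [equatorRetract, spread_mul_add ha.le, topGap_mul_add ha.le, spread_of_mem_cubeEquator hu,
    mul_one, max_eq_left hca, inv_smul_smul₀ ha.ne', topGap_of_mem_cubeRoof hu.1, sub_sub_cancel]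

theorem equatorRetract_of_mem_cubeEquator {c : ℝ} {u : ι → ℝ} (hu : u ∈ cubeEquator ι)
    (hc : 0 < c) (hc₁ : c ≤ 1) : equatorRetract c u = u := by
  simpa using equatorRetract_mul_add hu hc hc₁ 0

end Order

section Metric

variable {ι : Type*} [Fintype ι] [Nonempty ι]

theorem norm_topGap_le_spread (u : ι → ℝ) : ‖topGap u‖ ≤ spread u :=
  (pi_norm_le_iff_of_nonneg (spread_nonneg u)).2 fun i => by
    rw [Real.norm_of_nonneg (topGap_nonneg u i)]
    exact topGap_le_spread u i

theorem spread_le_two_mul_norm (u : ι → ℝ) : spread u ≤ 2 * ‖u‖ := by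
  refine ciSup_le fun i => ?_
  have hneg : -u i ≤ ‖u‖ := (neg_le_abs _).trans (norm_le_pi_norm u i)
  have hsup : ⨆ j, u j ≤ ‖u‖ := ciSup_le fun j => (le_abs_self _).trans (norm_le_pi_norm u j)
  rw [topGap]
  linarith

theorem lipschitzWith_topGap : LipschitzWith 2 (topGap : (ι → ℝ) → ι → ℝ) :=
  lipschitzWith_pi_iff.2 fun i =>
    (lipschitzWith_iSup.sub (LipschitzWith.eval i)).weaken (by norm_num)

theorem lipschitzWith_spread : LipschitzWith 2 (spread : (ι → ℝ) → ℝ) :=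
  (lipschitzWith_iSup.comp lipschitzWith_topGap).weaken (by norm_num)

theorem lipschitzWith_equatorRetract {c : ℝ≥0} (hc : 0 < c) :
    LipschitzWith (4 / c) (equatorRetract c : (ι → ℝ) → ι → ℝ) := by
  have hquot := lipschitzWith_inv_smul lipschitzWith_topGap (lipschitzWith_spread.max_const c) hc
    (fun u : ι → ℝ => le_max_right _ _)
    (fun u => (norm_topGap_le_spread u).trans (le_max_left _ _))
  exact ((LipschitzWith.const 1).sub hquot).weaken (le_of_eq (by ring))

end Metric

end Cube

section Depth

variable {X ι : Type*}

/-- The depth `min (dist x (U i)ᶜ / r) 1` of `x` in each member of a family of sets, with value `1`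
if `U i` is the whole space. It turns a cover into a Lipschitz map to `ι → ℝ`. -/
noncomputable def depth [PseudoMetricSpace X] {r : ℝ} (hr : 0 < r) (U : ι → Set X) (x : X) (i : ι) :
    ℝ :=
  1 - thickenedIndicator hr (U i)ᶜ x

variable [PseudoMetricSpace X] {r : ℝ} (hr : 0 < r) {U : ι → Set X} {x : X}

theorem depth_mem_Icc (i : ι) : depth hr U x i ∈ Icc (0 : ℝ) 1 :=
  ⟨sub_nonneg.2 (mod_cast thickenedIndicator_le_one hr _ x), sub_le_self _ (NNReal.coe_nonneg _)⟩

theorem depth_eq_zero {i : ι} (hx : x ∉ U i) : depth hr U x i = 0 := by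
  rw [depth, thickenedIndicator_one hr _ hx, NNReal.coe_one, sub_self]

theorem depth_eq_one {i : ι} (hx : ball x r ⊆ U i) : depth hr U x i = 1 := by
  have hthick : x ∉ thickening r (U i)ᶜ := fun hmem => by
    obtain ⟨y, hyU, hxy⟩ := mem_thickening_iff.1 hmem
    exact hyU (hx (mem_ball'.2 hxy))
  rw [depth, thickenedIndicator_zero hr _ hthick, NNReal.coe_zero, sub_zero]

theorem depth_mem_cubeRoof (hx : ∃ i, ball x r ⊆ U i) : depth hr U x ∈ cubeRoof ι :=
  ⟨depth_mem_Icc hr, hx.imp fun _ => depth_eq_one hr⟩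

theorem lipschitzWith_depth [Fintype ι] {r : ℝ≥0} (hr : 0 < (r : ℝ)) :
    LipschitzWith r⁻¹ (depth hr U) := by
  refine lipschitzWith_pi_iff.2 fun i => ?_
  have hcoe : LipschitzWith 1 ((↑) : ℝ≥0 → ℝ) := .of_dist_le_mul fun a b => by
    rw [NNReal.coe_one, one_mul, NNReal.dist_eq, Real.dist_eq]
  simpa [depth] using (LipschitzWith.const 1).sub
    (hcoe.comp (lipschitzWith_thickenedIndicator hr (U i)ᶜ))

end Depth

section Covers

variable {X ι : Type*} [MetricSpace X]

/-- Every sufficiently coarse cover of `X` indexed by `ι` has a refinement of multiplicity at most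
`n` whose Lebesgue number is comparable. -/
def LargeScaleCoverRefinement (X ι : Type*) [MetricSpace X] (n : ℕ) : Prop :=
  ∃ t : ℝ, 0 < t ∧ ∃ M : ℝ, 0 < M ∧ ∀ r : ℝ, M < r →
    ∀ U : ι → Set X, (∀ x : X, ∃ i, ball x r ⊆ U i) →
      ∃ V : Set (Set X), (∀ W ∈ V, ∃ i, W ⊆ U i) ∧ MultiplicityLE V n ∧
        ∀ x : X, ∃ W ∈ V, ball x (t * r) ⊆ W

variable [Fintype ι]

theorem MultiplicityLE.not_injective {V : Set (Set X)} {n : ℕ} (hV : MultiplicityLE V n)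
    (hn : n < Fintype.card ι) {x : X} {W : ι → Set X} (hW : ∀ i, W i ∈ V ∧ x ∈ interior (W i)) :
    ¬ W.Injective := fun hinj => by
  have hcard := ncard_le_ncard (range_subset_iff.2 hW) (hV x).1
  rw [← image_univ, ncard_image_of_injective _ hinj, ncard_univ, Nat.card_eq_fintype_card] at hcard
  exact absurd (hcard.trans (hV x).2) hn.not_ge

theorem multiplicityLE_range {O : ι → Set X} {n : ℕ} (hn : Fintype.card ι ≤ n + 1)
    (hO : ∀ x, ∃ i, x ∉ O i) : MultiplicityLE (range O) n := fun x => by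
  classical
  obtain ⟨k, hk⟩ := hO x
  have hsub : {W | W ∈ range O ∧ x ∈ interior W} ⊆ (Finset.univ.erase k).image O := by
    rintro _ ⟨⟨i, rfl⟩, hx⟩
    have hik : i ≠ k := fun h => hk (h ▸ interior_subset hx)
    exact Finset.mem_coe.2 (Finset.mem_image_of_mem O (by simp [hik]))
  refine ⟨(Finset.finite_toSet _).subset hsub, ?_⟩
  calc {W | W ∈ range O ∧ x ∈ interior W}.ncard ≤ ((Finset.univ.erase k).image O).card := by
        rw [← ncard_coe_finset]; exact ncard_le_ncard hsub (Finset.finite_toSet _)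
    _ ≤ (Finset.univ.erase k).card := Finset.card_image_le
    _ ≤ n := by rw [Finset.card_erase_of_mem (Finset.mem_univ k), Finset.card_univ]; omega

theorem exists_refinement_multiplicityLE_iff {n : ℕ} (hn : Fintype.card ι = n + 1)
    {U : ι → Set X} {s : ℝ} :
    (∃ V : Set (Set X), (∀ W ∈ V, ∃ i, W ⊆ U i) ∧ MultiplicityLE V n ∧
        ∀ x, ∃ W ∈ V, ball x s ⊆ W) ↔
      ∃ O : ι → Set X, (∀ i, O i ⊆ U i) ∧ (∀ x, ∃ i, x ∉ O i) ∧ ∀ x, ∃ i, ball x s ⊆ O i := by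
  constructor
  · rintro ⟨V, hVU, hVn, hVs⟩
    have : Nonempty ι := Fintype.card_pos_iff.1 (by omega)
    choose! σ hσ using hVU
    refine ⟨fun i => {x | ∃ W ∈ V, σ W = i ∧ x ∈ interior W}, ?_, fun x => ?_, fun x => ?_⟩
    · rintro _ x ⟨W, hW, rfl, hx⟩
      exact hσ W hW (interior_subset hx)
    · by_contra! hx
      choose W hWV hσW hxW using hx
      exact hVn.not_injective (hn ▸ n.lt_succ_self) (fun i => ⟨hWV i, hxW i⟩)
        (Function.LeftInverse.injective hσW)
    · obtain ⟨W, hW, hxW⟩ := hVs x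
      exact ⟨σ W, fun y hy => ⟨W, hW, rfl, interior_maximal hxW isOpen_ball hy⟩⟩
  · rintro ⟨O, hOU, hOn, hOs⟩
    refine ⟨range O, forall_mem_range.2 fun i => ⟨i, hOU i⟩, multiplicityLE_range hn.le hOn,
      fun x => ?_⟩
    obtain ⟨i, hi⟩ := hOs x
    exact ⟨O i, mem_range_self i, hi⟩

theorem largeScaleCoverRefinement_iff {n : ℕ} (hn : Fintype.card ι = n + 1) :
    LargeScaleCoverRefinement X ι n ↔
      ∃ t : ℝ, 0 < t ∧ ∃ M : ℝ, 0 < M ∧ ∀ r : ℝ, M < r →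
        ∀ U : ι → Set X, (∀ x, ∃ i, ball x r ⊆ U i) →
          ∃ O : ι → Set X,
            (∀ i, O i ⊆ U i) ∧ (∀ x, ∃ i, x ∉ O i) ∧ ∀ x, ∃ i, ball x (t * r) ⊆ O i := by
  simp only [LargeScaleCoverRefinement, exists_refinement_multiplicityLE_iff hn]

end Covers

section ExtensionToCover

variable {X ι : Type*} [MetricSpace X] [Fintype ι]

theorem exists_shrinking_of_extends_depth {r : ℝ} (hr : 0 < r) {U : ι → Set X} {K : ℝ≥0}
    {g : X → cubeEquator ι} (hg : LipschitzWith K g)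
    (hgU : ∀ x, depth hr U x ∈ cubeEquator ι → (g x : ι → ℝ) = depth hr U x)
    (hU : ∀ x, ∃ i, ball x r ⊆ U i) :
    ∃ O : ι → Set X,
      (∀ i, O i ⊆ U i) ∧ (∀ x, ∃ i, x ∉ O i) ∧ ∀ x, ∃ i, ball x (1 / K) ⊆ O i := by
  have hgi : ∀ i, LipschitzWith K fun x => (g x : ι → ℝ) i := lipschitzWith_pi_iff.1 hg
  refine ⟨fun i => {x | 0 < (g x : ι → ℝ) i}, fun i x hx => ?_, fun x => ?_, fun x => ?_⟩
  · by_contra hxU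
    have hzero : depth hr U x i = 0 := depth_eq_zero hr hxU
    rw [mem_ofPred_eq, hgU x ⟨depth_mem_cubeRoof hr (hU x), i, hzero⟩, hzero] at hx
    exact lt_irrefl 0 hx
  · obtain ⟨i, hi⟩ := (g x).2.2
    exact ⟨i, hi.not_gt⟩
  · obtain ⟨i, hi⟩ := (g x).2.1.2
    exact ⟨i, by simpa only [hi] using ball_div_subset_pos_of_lipschitzWith (hgi i) x⟩

theorem LargeScaleLipschitzExtensorOf.largeScaleCoverRefinement [Nontrivial ι] {n : ℕ}
    (hn : Fintype.card ι = n + 1) (h : LargeScaleLipschitzExtensorOf X (cubeEquator ι)) :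
    LargeScaleCoverRefinement X ι n := by
  obtain ⟨C, M, hM, H⟩ := largeScaleLipschitzExtensorOf_iff_lipschitzWith.1 h
  refine (largeScaleCoverRefinement_iff hn).2
    ⟨(C + 1)⁻¹, by positivity, M⁻¹, by positivity, fun r hMr U hU => ?_⟩
  have hr : 0 < r := (show (0 : ℝ) < M⁻¹ by positivity).trans hMr
  lift r to ℝ≥0 using hr.le
  have hr' : 0 < r := mod_cast hr
  set A : Set X := {x | depth hr U x ∈ cubeEquator ι}
  have hf : LipschitzWith r⁻¹ fun a : A => (⟨depth hr U a, a.2⟩ : cubeEquator ι) :=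
    fun a b => lipschitzWith_depth (U := U) hr a b
  obtain ⟨g, hgf, hg⟩ : ∃ g : X → cubeEquator ι,
      (∀ a : A, g a = ⟨depth hr U a, a.2⟩) ∧ LipschitzWith ((C + 1) * r⁻¹) g := by
    rcases A.eq_empty_or_nonempty with hA | hA
    · obtain ⟨p, hp⟩ := cubeEquator_nonempty (ι := ι)
      exact ⟨fun _ => ⟨p, hp⟩, fun a => (hA.subset a.2).elim,
        (LipschitzWith.const _).weaken (by positivity)⟩
    · have hrM : r⁻¹ < M := inv_lt_of_inv_lt₀ hM (mod_cast hMr)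
      obtain ⟨g, hgf, hg⟩ := H A hA r⁻¹ (by positivity) hrM _ hf
      exact ⟨g, hgf, hg.weaken (by gcongr; exact le_self_add)⟩
  have hrad : 1 / (((C + 1) * r⁻¹ : ℝ≥0) : ℝ) = (C + 1 : ℝ)⁻¹ * r := by
    push_cast
    rw [one_div, mul_inv, inv_inv]
  rw [← hrad]
  exact exists_shrinking_of_extends_depth hr hg (fun x hx => by rw [hgf ⟨x, hx⟩]) hU

end ExtensionToCover

section CoverToExtension

variable {X ι : Type*} [MetricSpace X]

/-- A path (with parameter `δ`) of bounded speed from `w` at `δ = 0` to `q` at `δ = 2`, passing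
through the coordinatewise maximum of `w` and `q` at `δ = 1`. Unlike the straight segment, it keeps
some coordinate equal to `1` when `w` and `q` have one. -/
noncomputable def supPath (δ : ℝ) (w q : ι → ℝ) (i : ι) : ℝ :=
  max (max (w i - max (δ - 1) 0) (q i - max (1 - δ) 0)) 0

theorem supPath_zero {w q : ι → ℝ} (hw : w ∈ cubeRoof ι) (hq : q ∈ cubeRoof ι) :
    supPath 0 w q = w := by
  ext i
  grind [supPath, hw.1 i, hq.1 i]

theorem supPath_mem_cubeRoof {δ : ℝ} {w q : ι → ℝ} (hw : w ∈ cubeRoof ι) (hq : q ∈ cubeRoof ι) :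
    supPath δ w q ∈ cubeRoof ι := by
  refine ⟨fun i => ?_, ?_⟩
  · have := hw.1 i
    have := hq.1 i
    grind [supPath]
  · obtain ⟨i, hi⟩ := hw.2
    obtain ⟨j, hj⟩ := hq.2
    have := hq.1 i
    have := hw.1 j
    rcases le_total δ 1 with hδ | hδ
    · exact ⟨i, by grind [supPath]⟩
    · exact ⟨j, by grind [supPath]⟩

theorem supPath_mem_cubeEquator {δ : ℝ} {w q : ι → ℝ} (hw : w ∈ cubeRoof ι)
    (hq : q ∈ cubeEquator ι) (hwq : ∀ i, w i = 0 → q i = 0) (hwδ : δ < 2 → w ∈ cubeEquator ι) :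
    supPath δ w q ∈ cubeEquator ι := by
  refine ⟨supPath_mem_cubeRoof hw hq.1, ?_⟩
  rcases lt_or_ge δ 2 with hδ | hδ
  · obtain ⟨i, hi⟩ := (hwδ hδ).2
    have := hwq i hi
    exact ⟨i, by grind [supPath]⟩
  · obtain ⟨i, hi⟩ := hq.2
    have := hw.1 i
    exact ⟨i, by grind [supPath]⟩

theorem lipschitzWith_supPath [Fintype ι] {δ : X → ℝ} {w q : X → ι → ℝ} {Kδ Kw Kq : ℝ≥0}
    (hδ : LipschitzWith Kδ δ) (hw : LipschitzWith Kw w) (hq : LipschitzWith Kq q) :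
    LipschitzWith (max (Kw + Kδ) (Kq + Kδ)) fun x => supPath (δ x) (w x) (q x) := by
  refine lipschitzWith_pi_iff.2 fun i => ?_
  have hlate : LipschitzWith Kδ fun x => max (δ x - 1) 0 := by
    simpa using (hδ.sub (LipschitzWith.const (1 : ℝ))).max_const 0
  have hearly : LipschitzWith Kδ fun x => max (1 - δ x) 0 := by
    simpa using ((LipschitzWith.const (1 : ℝ)).sub hδ).max_const 0
  exact (((lipschitzWith_pi_iff.1 hw i).sub hlate).max
    ((lipschitzWith_pi_iff.1 hq i).sub hearly)).max_const 0

variable [Fintype ι] {A : Set X} {K : ℝ≥0} {f : A → cubeEquator ι}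

theorem exists_lipschitzWith_cubeRoof_extension [Nonempty ι] (hf : LipschitzWith K f) :
    ∃ w : X → ι → ℝ, LipschitzWith (8 * K) w ∧ (∀ a : A, w a = f a) ∧ (∀ x, w x ∈ cubeRoof ι) ∧
      ∀ x, ∀ a ∈ A, 4 * K * dist x a ≤ 1 → w x ∈ cubeEquator ι := by
  obtain ⟨u, hu, huf⟩ : ∃ u : X → ι → ℝ, LipschitzWith K u ∧ ∀ a : A, u a = f a := by
    have hext (a : A) : Function.extend Subtype.val (fun a => (f a : ι → ℝ)) 0 (a : X) = f a :=
      Subtype.val_injective.extend_apply _ _ a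
    obtain ⟨u, hu, huA⟩ := LipschitzOnWith.extend_pi
      (f := Function.extend Subtype.val (fun a => (f a : ι → ℝ)) 0) (s := A) (K := K)
      fun x hx y hy => by rw [hext ⟨x, hx⟩, hext ⟨y, hy⟩]; exact hf ⟨x, hx⟩ ⟨y, hy⟩
    exact ⟨u, hu, fun a => (huA a.2).symm.trans (hext a)⟩
  have hhalf : (0 : ℝ) < (2⁻¹ : ℝ≥0) := by norm_num
  refine ⟨fun x => equatorRetract (2⁻¹ : ℝ≥0) (u x),
    ((lipschitzWith_equatorRetract (by norm_num)).comp hu).weaken (le_of_eq (by ring)), fun a => ?_,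
    fun x => equatorRetract_mem_cubeRoof hhalf (u x), fun x a ha hxa => ?_⟩
  · simp only [huf]
    exact equatorRetract_of_mem_cubeEquator (f a).2 hhalf (by norm_num)
  · have hspread : spread (u a) - spread (u x) ≤ 2 * K * dist a x :=
      (le_abs_self _).trans ((lipschitzWith_spread.comp hu).dist_le_mul a x)
    rw [huf ⟨a, ha⟩, spread_of_mem_cubeEquator (f ⟨a, ha⟩).2, dist_comm] at hspread
    refine equatorRetract_mem_cubeEquator hhalf ?_
    push_cast
    linarith

theorem exists_lipschitzWith_extension_of_shrinking [Nonempty ι] (hA : A.Nonempty)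
    (hK : 0 < K) (hf : LipschitzWith K f) {s : ℝ≥0} (hs : 0 < (s : ℝ))
    (H : ∀ U : ι → Set X, (∀ x, ∃ i, ball x (8 * K : ℝ)⁻¹ ⊆ U i) → ∃ O : ι → Set X,
      (∀ i, O i ⊆ U i) ∧ (∀ x, ∃ i, x ∉ O i) ∧ ∀ x, ∃ i, ball x s ⊆ O i) :
    ∃ g : X → cubeEquator ι, (∀ a : A, g a = f a) ∧ LipschitzWith (16 * K + s⁻¹) g := by
  obtain ⟨w, hw, hwf, hwroof, hwnear⟩ := exists_lipschitzWith_cubeRoof_extension hf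
  obtain ⟨O, hOw, hOne, hOs⟩ := H (fun i => {x | 0 < w x i}) fun x => by
    obtain ⟨i, hi⟩ := (hwroof x).2
    have hball := ball_div_subset_pos_of_lipschitzWith (lipschitzWith_pi_iff.1 hw i) x
    exact ⟨i, by simpa [hi] using hball⟩
  have hq (x : X) : depth hs O x ∈ cubeEquator ι :=
    ⟨depth_mem_cubeRoof hs (hOs x), (hOne x).imp fun _ => depth_eq_zero hs⟩
  have hδ : LipschitzWith (8 * K) fun x => 8 * K * infDist x A := by
    simpa [Function.comp_def] using (lipschitzWith_smul (8 * K : ℝ)).comp (lipschitz_infDist_pt A)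
  have hnear (x : X) (hx : 8 * K * infDist x A < 2) : w x ∈ cubeEquator ι := by
    have hdist : infDist x A < 2 / (8 * K) := by rwa [lt_div_iff₀' (by positivity)]
    obtain ⟨a, ha, hxa⟩ := (infDist_lt_iff hA).1 hdist
    rw [lt_div_iff₀' (by positivity)] at hxa
    exact hwnear x a ha (by linarith)
  have hg (x : X) : supPath (8 * K * infDist x A) (w x) (depth hs O x) ∈ cubeEquator ι :=
    supPath_mem_cubeEquator (hwroof x) (hq x)
      (fun i hi => depth_eq_zero hs fun hx => (hOw i hx).ne' hi) (hnear x)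
  refine ⟨fun x => ⟨_, hg x⟩, fun a => Subtype.ext ?_, ?_⟩
  · simp only [infDist_zero_of_mem a.2, mul_zero]
    rw [supPath_zero (hwroof a) (hq a).1, hwf]
  · refine (lipschitzWith_supPath hδ hw (lipschitzWith_depth hs)).weaken (max_le ?_ ?_)
    · calc 8 * K + 8 * K = 16 * K := by ring
        _ ≤ 16 * K + s⁻¹ := le_self_add
    · rw [add_comm]
      gcongr
      norm_num

theorem LargeScaleCoverRefinement.largeScaleLipschitzExtensorOf {n : ℕ}
    (hn : Fintype.card ι = n + 1) (h : LargeScaleCoverRefinement X ι n) :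
    LargeScaleLipschitzExtensorOf X (cubeEquator ι) := by
  obtain ⟨t, ht, M, hM, H⟩ := (largeScaleCoverRefinement_iff hn).1 h
  lift t to ℝ≥0 using ht.le
  lift M to ℝ≥0 using hM.le
  have : Nonempty ι := Fintype.card_pos_iff.1 (by omega)
  replace ht : 0 < t := mod_cast ht
  replace hM : 0 < M := mod_cast hM
  refine largeScaleLipschitzExtensorOf_iff_lipschitzWith.2
    ⟨16 + 8 / t, (8 * M)⁻¹, by positivity, fun A hA K hK hKM f hf => ?_⟩
  have hMr : M < (8 * K)⁻¹ := by
    rw [lt_inv_comm₀ hM (by positivity)]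
    rwa [mul_inv, lt_inv_mul_iff₀ (by norm_num)] at hKM
  have hs : 0 < t * (8 * K)⁻¹ := by positivity
  obtain ⟨g, hgf, hg⟩ := exists_lipschitzWith_extension_of_shrinking hA hK hf (NNReal.coe_pos.2 hs)
    (by exact_mod_cast H (8 * K : ℝ)⁻¹ (mod_cast hMr))
  refine ⟨g, hgf, hg.weaken (le_of_eq ?_)⟩
  rw [mul_inv, inv_inv, add_mul]
  ring

theorem largeScaleLipschitzExtensorOf_cubeEquator_iff [Nontrivial ι] {n : ℕ}
    (hn : Fintype.card ι = n + 1) :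
    LargeScaleLipschitzExtensorOf X (cubeEquator ι) ↔ LargeScaleCoverRefinement X ι n :=
  ⟨fun h => h.largeScaleCoverRefinement hn, fun h => h.largeScaleLipschitzExtensorOf hn⟩

end CoverToExtension

section Sphere

variable {ι E : Type*} [NormedAddCommGroup E] [NormedSpace ℝ E]
  {T : (ι → ℝ) →L[ℝ] E} {S : E →L[ℝ] ι → ℝ}

theorem map_topGap (hT : T 1 = 0) (u : ι → ℝ) : T (topGap u) = -T u := by
  have htop : topGap u = (⨆ i, u i) • 1 - u := by ext i; simp [topGap]
  rw [htop, map_sub, map_smul, hT, smul_zero, zero_sub]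

theorem map_equatorRetract (hT : T 1 = 0) (c : ℝ) (u : ι → ℝ) :
    T (equatorRetract c u) = (max (spread u) c)⁻¹ • T u := by
  rw [equatorRetract, map_sub, map_smul, map_topGap hT, hT, smul_neg, zero_sub, neg_neg]

theorem exists_section_map_eq_add (hT : T.ker = Submodule.span ℝ {1})
    (hTS : Function.LeftInverse T S) (u : ι → ℝ) : ∃ b : ℝ, ∀ i, S (T u) i = u i + b := by
  have hker : S (T u) - u ∈ T.ker := by
    rw [LinearMap.mem_ker]
    simp [hTS (T u)]
  rw [hT, Submodule.mem_span_singleton] at hker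
  obtain ⟨b, hb⟩ := hker
  refine ⟨b, fun i => ?_⟩
  have hbi := congrFun hb i
  simp only [Pi.smul_apply, Pi.one_apply, smul_eq_mul, mul_one, Pi.sub_apply] at hbi
  linarith

theorem equatorRetract_section_smul_map [Finite ι] [Nonempty ι]
    (hT : T.ker = Submodule.span ℝ {1}) (hTS : Function.LeftInverse T S) {a c : ℝ} {u : ι → ℝ}
    (hu : u ∈ cubeEquator ι) (hc : 0 < c) (hca : c ≤ a) : equatorRetract c (S (a • T u)) = u := by
  obtain ⟨b, hb⟩ := exists_section_map_eq_add hT hTS u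
  have hS : S (a • T u) = fun i => a * u i + a * b := by
    ext i
    rw [map_smul, Pi.smul_apply, hb, smul_eq_mul, mul_add]
  rw [hS, equatorRetract_mul_add hu hc hca]

variable [Fintype ι]

theorem exists_ker_eq_span_one_and_leftInverse [FiniteDimensional ℝ E]
    (hE : Fintype.card ι = Module.finrank ℝ E + 1) :
    ∃ (T : (ι → ℝ) →L[ℝ] E) (S : E →L[ℝ] ι → ℝ),
      T.ker = Submodule.span ℝ {1} ∧ Function.LeftInverse T S := by
  have : Nonempty ι := Fintype.card_pos_iff.1 (by omega)
  set L : Submodule ℝ (ι → ℝ) := Submodule.span ℝ {1} with hL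
  have hquot : Module.finrank ℝ ((ι → ℝ) ⧸ L) = Module.finrank ℝ E := by
    have hadd := L.finrank_quotient_add_finrank
    rw [hL, finrank_span_singleton one_ne_zero, Module.finrank_fintype_fun_eq_card, hE] at hadd
    exact Nat.add_right_cancel hadd
  set e := LinearEquiv.ofFinrankEq _ E hquot
  set T := e.toLinearMap ∘ₗ L.mkQ
  obtain ⟨S, hS⟩ := T.exists_rightInverse_of_surjective
    (LinearMap.range_eq_top.2 (e.surjective.comp L.mkQ_surjective))
  refine ⟨T.toContinuousLinearMap, S.toContinuousLinearMap, ?_, LinearMap.congr_fun hS⟩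
  simp [T]

section Bounds

variable [Nonempty ι]

theorem norm_map_le_opNorm_mul_spread (hT : T 1 = 0) (u : ι → ℝ) :
    ‖T u‖ ≤ ‖T‖ * spread u :=
  calc ‖T u‖ = ‖T (topGap u)‖ := by rw [map_topGap hT, norm_neg]
    _ ≤ ‖T‖ * ‖topGap u‖ := T.le_opNorm _
    _ ≤ ‖T‖ * spread u := by gcongr; exact norm_topGap_le_spread u

theorem spread_le_two_mul_opNorm_mul_norm_map (hT : T.ker = Submodule.span ℝ {1})
    (hTS : Function.LeftInverse T S) (u : ι → ℝ) : spread u ≤ 2 * ‖S‖ * ‖T u‖ := by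
  obtain ⟨b, hb⟩ := exists_section_map_eq_add hT hTS u
  have hSTu : S (T u) = fun i => 1 * u i + b := by ext i; rw [hb, one_mul]
  calc spread u = spread (S (T u)) := by rw [hSTu, spread_mul_add zero_le_one, one_mul]
    _ ≤ 2 * ‖S (T u)‖ := spread_le_two_mul_norm _
    _ ≤ 2 * ‖S‖ * ‖T u‖ := by rw [mul_assoc]; gcongr; exact S.le_opNorm _

theorem inv_le_norm_map_of_mem_cubeEquator (hT : T.ker = Submodule.span ℝ {1})
    (hTS : Function.LeftInverse T S) {u : ι → ℝ} (hu : u ∈ cubeEquator ι) :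
    (2 * ‖S‖ + 1)⁻¹ ≤ ‖T u‖ := by
  have hspread := spread_le_two_mul_opNorm_mul_norm_map hT hTS u
  rw [spread_of_mem_cubeEquator hu] at hspread
  rw [inv_le_iff_one_le_mul₀' (by positivity)]
  linarith [norm_nonneg (T u)]

theorem norm_map_le_opNorm_add_one_of_mem_cubeEquator (hT : T 1 = 0) {u : ι → ℝ}
    (hu : u ∈ cubeEquator ι) : ‖T u‖ ≤ ‖T‖ + 1 := by
  have hnorm := norm_map_le_opNorm_mul_spread hT u
  rw [spread_of_mem_cubeEquator hu] at hnorm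
  linarith

theorem inv_le_spread_section_of_norm_eq_one (hT : T 1 = 0) (hTS : Function.LeftInverse T S)
    {v : E} (hv : ‖v‖ = 1) : (‖T‖ + 1)⁻¹ ≤ spread (S v) := by
  have hnorm := norm_map_le_opNorm_mul_spread hT (S v)
  rw [hTS, hv] at hnorm
  rw [inv_le_iff_one_le_mul₀' (by positivity)]
  linarith [spread_nonneg (S v)]

theorem exists_lipschitzWith_inverse_cubeEquator_sphere (hT : T.ker = Submodule.span ℝ {1})
    (hTS : Function.LeftInverse T S) :
    ∃ (Kφ Kψ : ℝ≥0) (φ : cubeEquator ι → sphere (0 : E) 1) (ψ : sphere (0 : E) 1 → cubeEquator ι),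
      LipschitzWith Kφ φ ∧ LipschitzWith Kψ ψ ∧
        Function.LeftInverse φ ψ ∧ Function.LeftInverse ψ φ := by
  have hT1 : T 1 = 0 := LinearMap.mem_ker.1 (hT ▸ Submodule.mem_span_singleton_self 1)
  set b : ℝ≥0 := (2 * ‖S‖₊ + 1)⁻¹
  have hb : 0 < b := by positivity
  have hbT (u : cubeEquator ι) : b ≤ ‖T u‖ := inv_le_norm_map_of_mem_cubeEquator hT hTS u.2
  have hTpos (u : cubeEquator ι) : 0 < ‖T u‖ := (NNReal.coe_pos.2 hb).trans_le (hbT u)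
  set φ : cubeEquator ι → sphere (0 : E) 1 := fun u => ⟨‖T u‖⁻¹ • T u, by
    rw [mem_sphere_zero_iff_norm, norm_smul, norm_inv, norm_norm, inv_mul_cancel₀ (hTpos u).ne']⟩
  have hTlip : LipschitzWith ‖T‖₊ fun u : cubeEquator ι => T u := fun u v => T.lipschitz u v
  have hφ := lipschitzWith_inv_smul hTlip (lipschitzWith_one_norm.comp hTlip) hb hbT fun _ => le_rfl
  set c : ℝ≥0 := (‖T‖₊ + 1)⁻¹
  have hc : 0 < c := by positivity
  have hcS (v : sphere (0 : E) 1) : c ≤ spread (S v) :=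
    inv_le_spread_section_of_norm_eq_one hT1 hTS (norm_eq_of_mem_sphere v)
  set ψ : sphere (0 : E) 1 → cubeEquator ι := fun v =>
    ⟨equatorRetract c (S v), equatorRetract_mem_cubeEquator hc (hcS v)⟩
  have hψ := ((lipschitzWith_equatorRetract hc).comp S.lipschitz).comp
    (LipschitzWith.subtype_val (sphere (0 : E) 1))
  refine ⟨_, _, φ, ψ, hφ, hψ, fun v => Subtype.ext ?_, fun u => Subtype.ext ?_⟩
  · have hmax : 0 < (max (spread (S v)) c)⁻¹ := inv_pos.2 (lt_max_of_lt_right hc)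
    simp only [φ, ψ, map_equatorRetract hT1, hTS (v : E), norm_smul, norm_eq_of_mem_sphere,
      mul_one, Real.norm_of_nonneg hmax.le, inv_smul_smul₀ hmax.ne']
  · exact equatorRetract_section_smul_map hT hTS u.2 hc
      (inv_anti₀ (hTpos u) (norm_map_le_opNorm_add_one_of_mem_cubeEquator hT1 u.2))

end Bounds

theorem largeScaleLipschitzExtensorOf_sphere_iff_cubeEquator {X : Type*} [MetricSpace X]
    [FiniteDimensional ℝ E] (hE : Fintype.card ι = Module.finrank ℝ E + 1) :
    LargeScaleLipschitzExtensorOf X (sphere (0 : E) 1) ↔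
      LargeScaleLipschitzExtensorOf X (cubeEquator ι) := by
  have : Nonempty ι := Fintype.card_pos_iff.1 (by omega)
  obtain ⟨T, S, hT, hTS⟩ := exists_ker_eq_span_one_and_leftInverse hE
  obtain ⟨Kφ, Kψ, φ, ψ, hφ, hψ, hφψ, hψφ⟩ := exists_lipschitzWith_inverse_cubeEquator_sphere hT hTS
  exact largeScaleLipschitzExtensorOf_congr hψ hφ hψφ hφψ

end Sphere

theorem sphere_large_scale_extensor_iff_cover_refinement_general {X E : Type*} [MetricSpace X]
    [NormedAddCommGroup E] [NormedSpace ℝ E] (m : ℕ) (hE : Module.finrank ℝ E = m + 1) :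
    LargeScaleLipschitzExtensorOf X (sphere (0 : E) 1) ↔
      LargeScaleCoverRefinement X (Fin (m + 2)) (m + 1) := by
  have : FiniteDimensional ℝ E := .of_finrank_pos (by omega)
  have hcard : Fintype.card (Fin (m + 2)) = m + 1 + 1 := Fintype.card_fin _
  rw [largeScaleLipschitzExtensorOf_sphere_iff_cubeEquator (ι := Fin (m + 2)) (by rw [hcard, hE]),
    largeScaleLipschitzExtensorOf_cubeEquator_iff hcard]

theorem sphere_large_scale_extensor_iff_cover_refinement
    {X : Type*} [MetricSpace X] (m : ℕ) :
    LargeScaleLipschitzExtensorOf X (Metric.sphere (0 : EuclideanSpace ℝ (Fin (m + 1))) 1) ↔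
      ∃ t : ℝ, 0 < t ∧ ∃ M : ℝ, 0 < M ∧ ∀ r : ℝ, M < r →
        ∀ U : Fin (m + 2) → Set X, (∀ x : X, ∃ i, Metric.ball x r ⊆ U i) →
          ∃ V : Set (Set X),
            (∀ W ∈ V, ∃ i, W ⊆ U i) ∧
            MultiplicityLE V (m + 1) ∧
            (∀ x : X, ∃ W ∈ V, Metric.ball x (t * r) ⊆ W) :=
  sphere_large_scale_extensor_iff_cover_refinement_general m finrank_euclideanSpace_fin
end
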